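/- arXiv:1112.5015 — 2 statements merged into one kernel-verified Lean document; each statement's English description precedes it below -/
import Mathlib

section
/- Let K be a field of characteristic 0, let A be a Cohen-Macaulay standard graded K-algebra of odd Krull dimension d with h-polynomial h_A(t), and let Θ = θ_1,…,θ_d be a linear system of parameters for A. If r ≥ d/2 and deg h_A(t) ≤ d/2, then A_Θ^⟨r⟩ has the weak Lefschetz property. -/
/-- The degree-`i` component of the ideal `(θ₁^r, …, θ_d^r) A^⟨r⟩` of the `r`-th Veronese
subalgebra `A^⟨r⟩ = ⊕_i A_{ir}`, viewed as a `K`-submodule of `A`: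
it is `0` in degree `0` and `θ₁^r A_{ir} + ⋯ + θ_d^r A_{ir}` in degree `i+1`.
The degree-`i` component of `A_Θ^⟨r⟩ = A^⟨r⟩/(θ₁^r, …, θ_d^r)A^⟨r⟩` is then
`𝒜 (i*r) ⧸ veroneseLsopIdealComponent K 𝒜 θ r i`. -/
noncomputable def veroneseLsopIdealComponent (K : Type*) {A : Type*} [CommRing K] [CommRing A]
    [Algebra K A] (𝒜 : ℕ → Submodule K A) {d : ℕ} (θ : Fin d → A) (r : ℕ) :
    ℕ → Submodule K A
  | 0 => ⊥
  | (i + 1) => ⨆ j : Fin d, Submodule.map (LinearMap.mulLeft K (θ j ^ r)) (𝒜 (i * r))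

/-!
Through `X j ↦ θ j`, the algebra `A` becomes a module over `S = K[X_1, …, X_d]`; since `θ` is a
regular sequence of linear forms, this module is graded free, with a basis lifting a homogeneous
`K`-basis of `A / ΘA`. The Hilbert series of `A / ΘA` is the `h`-polynomial, so the basis lives in
degrees at most `deg h`. Hence `A / (θ_1 ^ r, …, θ_d ^ r)` is a direct sum of copies of the monomial
complete intersection `S / (X_1 ^ r, …, X_d ^ r)` shifted by at most `deg h ≤ d / 2`.

On this complete intersection `ℓ = X_1 + ⋯ + X_d` is the raising operator of an `sl₂`-action, so
`ℓ ^ r` is injective in low degrees and surjective in high degrees. The bounds on `r` and `deg h`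
make the two ranges of degrees cover all multiples of `r`, simultaneously for all shifts, and
`w = (θ_1 + ⋯ + θ_d) ^ r` is the required Lefschetz element.
-/

namespace VeroneseLefschetz

universe u

section Sl2

variable {K V : Type*} [CommRing K] [AddCommGroup V] [Module K V]

theorem apply_pow_apply (E : V →ₗ[K] V) (k : ℕ) (v : V) : E ((E ^ k) v) = (E ^ (k + 1)) v := by
  rw [pow_succ', Module.End.mul_apply]

/-- A raising operator `E` and a lowering operator `F` on weight pieces `W 0, W 1, …` obeying the
`sl₂` commutation relation `[F, E] = D - 2n` on `W n`. The pieces are indexed by degree, so `W n` is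
the space of `sl₂`-weight `2n - D`; they need neither span nor be independent. -/
structure IsSl2Pair (E F : V →ₗ[K] V) (W : ℕ → Submodule K V) (D : ℕ) : Prop where
  raise_mem : ∀ {n v}, v ∈ W n → E v ∈ W (n + 1)
  lower_mem : ∀ {n v}, v ∈ W (n + 1) → F v ∈ W n
  lower_zero : ∀ {v}, v ∈ W 0 → F v = 0
  lower_raise : ∀ {n v}, v ∈ W n → F (E v) = E (F v) + ((D : K) - 2 * n) • v

namespace IsSl2Pair

variable {E F : V →ₗ[K] V} {W : ℕ → Submodule K V} {D : ℕ}

theorem pow_raise_mem (P : IsSl2Pair E F W D) {n : ℕ} {v : V} (hv : v ∈ W n) (k : ℕ) :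
    (E ^ k) v ∈ W (n + k) := by
  induction k with
  | zero => simpa using hv
  | succ k ih =>
    rw [← apply_pow_apply]
    exact P.raise_mem ih

theorem raise_lower_mem (P : IsSl2Pair E F W D) {n : ℕ} {v : V} (hv : v ∈ W n) :
    E (F v) ∈ W n := by
  cases n with
  | zero => simp [P.lower_zero hv]
  | succ n => exact P.raise_mem (P.lower_mem hv)

theorem lower_pow_succ_raise (P : IsSl2Pair E F W D) {n : ℕ} {v : V} (hv : v ∈ W n) (k : ℕ) :
    F ((E ^ (k + 1)) v) =
      (E ^ (k + 1)) (F v) + (((k : K) + 1) * ((D : K) - 2 * n - k)) • (E ^ k) v := by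
  induction k with
  | zero => simpa using P.lower_raise hv
  | succ k ih =>
    rw [← apply_pow_apply, P.lower_raise (P.pow_raise_mem hv _), ih, map_add, map_smul,
      apply_pow_apply, apply_pow_apply, add_assoc, ← add_smul]
    congr 2
    push_cast
    ring

theorem mapQ (P : IsSl2Pair E F W D) {N : Submodule K V} (hE : N ≤ N.comap E)
    (hF : N ≤ N.comap F) :
    IsSl2Pair (N.mapQ N E hE) (N.mapQ N F hF) (fun n => (W n).map N.mkQ) D where
  raise_mem := by
    rintro n _ ⟨v, hv, rfl⟩
    exact ⟨E v, P.raise_mem hv, rfl⟩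
  lower_mem := by
    rintro n _ ⟨v, hv, rfl⟩
    exact ⟨F v, P.lower_mem hv, rfl⟩
  lower_zero := by
    rintro _ ⟨v, hv, rfl⟩
    simp [P.lower_zero hv]
  lower_raise := by
    rintro n _ ⟨v, hv, rfl⟩
    simp [P.lower_raise hv]

section Field

variable {K V : Type*} [Field K] [CharZero K] [AddCommGroup V] [Module K V] {E F : V →ₗ[K] V}
  {W : ℕ → Submodule K V} {D : ℕ}

theorem coeff_ne_zero {n k : ℕ} (h : 2 * n + k ≠ D) :
    ((k : K) + 1) * ((D : K) - 2 * n - k) ≠ 0 := by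
  refine mul_ne_zero (Nat.cast_add_one_ne_zero k) fun h0 => h ?_
  have : ((2 * n + k : ℕ) : K) = D := by
    push_cast
    linear_combination -h0
  exact_mod_cast this

theorem eq_zero_of_pow_raise_eq_zero (P : IsSl2Pair E F W D) {n k : ℕ} (hk : 2 * n + k ≤ D)
    {v : V} (hv : v ∈ W n) (h : (E ^ k) v = 0) : v = 0 := by
  match k with
  | 0 => simpa using h
  | k + 1 =>
    have comm := P.lower_pow_succ_raise hv k
    have lower_eq_zero : F v = 0 := by
      match n with
      | 0 => exact P.lower_zero hv
      | n + 1 =>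
        refine P.eq_zero_of_pow_raise_eq_zero (k := k + 2) (by omega) (P.lower_mem hv) ?_
        have hE := congrArg E comm
        rw [map_add, map_smul, apply_pow_apply, apply_pow_apply, h, map_zero, map_zero, smul_zero,
          add_zero] at hE
        exact hE.symm
    rw [h, lower_eq_zero, map_zero, map_zero, zero_add] at comm
    exact P.eq_zero_of_pow_raise_eq_zero (by omega) hv
      ((smul_eq_zero.1 comm.symm).resolve_left (coeff_ne_zero (by omega)))
termination_by (n, k)

theorem exists_pow_raise_eq (P : IsSl2Pair E F W D) (hD : ∀ n, D < n → W n = ⊥) {n k : ℕ}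
    (hk : D ≤ 2 * n + k) {y : V} (hy : y ∈ W (n + k)) : ∃ z ∈ W n, (E ^ k) z = y := by
  by_cases hlarge : D < n + k
  · rw [hD _ hlarge, Submodule.mem_bot] at hy
    exact ⟨0, zero_mem _, by rw [map_zero, hy]⟩
  match k with
  | 0 => exact ⟨y, hy, rfl⟩
  | k + 1 =>
    obtain ⟨z, hz, hzy⟩ := P.exists_pow_raise_eq hD (n := n + 1) (k := k) (by omega)
      (by rwa [add_right_comm])
    obtain ⟨u, hu, huy⟩ := P.exists_pow_raise_eq hD (n := n) (k := k + 2) (by omega)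
      (P.raise_mem hy)
    -- Both `E ^ (k + 1) z` and `E ^ (k + 2) u` equal `E y`; comparing their images under `F`
    -- writes a nonzero multiple of `y` as `E ^ (k + 1)` of an element of `W n`.
    set c : K := ((k : K) + 1) * ((D : K) - 2 * (n + 1 : ℕ) - k)
    set c' : K := ((k + 1 : ℕ) + 1) * ((D : K) - 2 * n - (k + 1 : ℕ))
    have lower_via_z : F (E y) = (E ^ (k + 1)) (F z) + c • y := by
      rw [← hzy, apply_pow_apply, P.lower_pow_succ_raise hz k]
    have lower_via_u : F (E y) = (E ^ (k + 1)) (E (F u) + c' • u) := by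
      rw [← huy, P.lower_pow_succ_raise hu (k + 1), pow_succ E (k + 1), Module.End.mul_apply,
        map_add, map_smul]
    refine ⟨c⁻¹ • (E (F u) + c' • u - F z), Submodule.smul_mem _ _ (sub_mem (add_mem
      (P.raise_lower_mem hu) (Submodule.smul_mem _ _ hu)) (P.lower_mem hz)), ?_⟩
    rw [map_smul, inv_smul_eq_iff₀ (coeff_ne_zero (by omega)), map_sub, ← lower_via_u, lower_via_z,
      add_sub_cancel_left]
termination_by 2 * D + 1 - (2 * n + k)

variable {N : Submodule K V}

theorem mem_of_pow_raise_mem (P : IsSl2Pair E F W D) (hE : N ≤ N.comap E) (hF : N ≤ N.comap F)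
    {n k : ℕ} (hk : 2 * n + k ≤ D) {v : V} (hv : v ∈ W n) (h : (E ^ k) v ∈ N) : v ∈ N := by
  rw [← Submodule.Quotient.mk_eq_zero N] at h ⊢
  refine (P.mapQ hE hF).eq_zero_of_pow_raise_eq_zero hk ⟨v, hv, rfl⟩ ?_
  rwa [← Submodule.mapQ_pow]

theorem exists_sub_pow_raise_mem (P : IsSl2Pair E F W D) (hE : N ≤ N.comap E)
    (hF : N ≤ N.comap F) (hD : ∀ n, D < n → W n ≤ N) {n k : ℕ} (hk : D ≤ 2 * n + k) {y : V}
    (hy : y ∈ W (n + k)) : ∃ z ∈ W n, y - (E ^ k) z ∈ N := by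
  have map_eq_bot (m : ℕ) (hm : D < m) : (W m).map N.mkQ = ⊥ := by
    rw [← LinearMap.le_ker_iff_map, Submodule.ker_mkQ]
    exact hD m hm
  obtain ⟨_, ⟨z, hz, rfl⟩, hzy⟩ := (P.mapQ hE hF).exists_pow_raise_eq map_eq_bot hk ⟨y, hy, rfl⟩
  rw [← Submodule.mapQ_pow] at hzy
  exact ⟨z, hz, (Submodule.Quotient.eq N).1 hzy.symm⟩

end Field

end IsSl2Pair

end Sl2

section MonomialCompleteIntersection

open MvPolynomial

variable {K σ : Type*} [CommRing K]

/-- The ideal generated by the pure powers `X i ^ (a i + 1)`. The exponents are shifted by one so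
that they are positive and the socle degree of the quotient is `∑ i, a i`. -/
noncomputable def varPowIdeal (K : Type*) [CommRing K] (a : σ → ℕ) : Ideal (MvPolynomial σ K) :=
  Ideal.span (Set.range fun i => X i ^ (a i + 1))

theorem mem_varPowIdeal_of_le {a : σ → ℕ} {i : σ} {n : σ →₀ ℕ} (h : a i < n i) (c : K) :
    monomial n c ∈ varPowIdeal K a := by
  have factor : monomial n c = X i ^ (a i + 1) * monomial (n - Finsupp.single i (a i + 1)) c := by
    rw [X_pow_eq_monomial, monomial_mul, one_mul,
      add_tsub_cancel_of_le (Finsupp.single_le_iff.2 h)]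
  rw [factor]
  exact Ideal.mul_mem_right _ _ (Ideal.subset_span ⟨i, rfl⟩)

theorem isHomogeneous_X_mul_pderiv (i : σ) {n : ℕ} {f : MvPolynomial σ K} (hf : f.IsHomogeneous n) :
    (X i * pderiv i f).IsHomogeneous n := by
  cases n with
  | zero =>
    rw [totalDegree_eq_zero_iff_eq_C.1 (Nat.le_zero.1 hf.totalDegree_le), pderiv_C, mul_zero]
    exact isHomogeneous_zero _ _ _
  | succ n =>
    rw [add_comm]
    exact (isHomogeneous_X _ _).mul hf.pderiv

variable [Fintype σ]

theorem mem_varPowIdeal_of_isHomogeneous {a : σ → ℕ} {n : ℕ} (hn : ∑ i, a i < n)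
    {f : MvPolynomial σ K} (hf : f.IsHomogeneous n) : f ∈ varPowIdeal K a := by
  rw [f.as_sum]
  refine Ideal.sum_mem _ fun m hm => ?_
  have degree_eq : ∑ i, m i = n := by
    rw [← Finsupp.degree_eq_sum]
    exact of_not_not fun hne => mem_support_iff.1 hm (hf.coeff_eq_zero hne)
  obtain ⟨i, -, hi⟩ := Finset.exists_lt_of_sum_lt (hn.trans_eq degree_eq.symm)
  exact mem_varPowIdeal_of_le hi _

/-- The operator `∑ i, (a i * ∂ᵢ - Xᵢ * ∂ᵢ²)`, which lowers degrees by one and together with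
multiplication by `∑ i, X i` forms an `sl₂`-pair. It is the usual lowering operator on
`⨂ i, K[Xᵢ] / (Xᵢ ^ (a i + 1))`, rescaled so as to be defined on polynomials. -/
noncomputable def lowering (a : σ → ℕ) : MvPolynomial σ K →ₗ[K] MvPolynomial σ K :=
  ∑ i, ((a i : K) • (pderiv i).toLinearMap -
    LinearMap.mulLeft K (X i) ∘ₗ (pderiv i).toLinearMap ∘ₗ (pderiv i).toLinearMap)

theorem lowering_apply (a : σ → ℕ) (f : MvPolynomial σ K) :
    lowering a f = ∑ i, ((a i : MvPolynomial σ K) * pderiv i f - X i * pderiv i (pderiv i f)) := by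
  simp [lowering, smul_eq_C_mul]

theorem lowering_X_mul (a : σ → ℕ) (j : σ) (f : MvPolynomial σ K) :
    lowering a (X j * f) =
      X j * lowering a f + ((a j : MvPolynomial σ K) * f - 2 * (X j * pderiv j f)) := by
  classical
  rw [← sub_eq_iff_eq_add', lowering_apply, lowering_apply, Finset.mul_sum,
    ← Finset.sum_sub_distrib, Finset.sum_eq_single j]
  · simp only [pderiv_mul, pderiv_X_self, map_add, one_mul]
    ring
  · intro i _ hij
    simp only [pderiv_mul, pderiv_X_of_ne hij.symm, zero_mul, zero_add]
    ring
  · simp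

theorem lowering_sum_X_mul (a : σ → ℕ) {n : ℕ} {f : MvPolynomial σ K} (hf : f.IsHomogeneous n) :
    lowering a ((∑ j, X j) * f) =
      (∑ j, X j) * lowering a f + (((∑ i, a i : ℕ) : K) - 2 * n) • f := by
  have euler : ∑ j, X j * pderiv j f = n • f := hf.sum_X_mul_pderiv
  simp only [Finset.sum_mul, map_sum, lowering_X_mul, Finset.sum_add_distrib,
    Finset.sum_sub_distrib, ← Finset.mul_sum, euler]
  rw [sub_smul, mul_smul, Nat.cast_smul_eq_nsmul, Nat.cast_smul_eq_nsmul, ofNat_smul_eq_nsmul]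
  simp only [nsmul_eq_mul, Nat.cast_sum, Finset.sum_mul, Nat.cast_ofNat]

theorem dvd_lowering_X_pow_mul (a : σ → ℕ) (j : σ) (g : MvPolynomial σ K) :
    X j ^ (a j + 1) ∣ lowering a (X j ^ (a j + 1) * g) := by
  classical
  rw [lowering_apply]
  refine Finset.dvd_sum fun i _ => ?_
  rcases eq_or_ne i j with rfl | hij
  · refine ⟨(a i : MvPolynomial σ K) * pderiv i g -
      2 * ((a i : MvPolynomial σ K) + 1) * pderiv i g - X i * pderiv i (pderiv i g), ?_⟩
    cases h : a i <;> simp <;> ring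
  · refine ⟨(a i : MvPolynomial σ K) * pderiv i g - X i * pderiv i (pderiv i g), ?_⟩
    simp only [pderiv_mul, pderiv_X_of_ne hij.symm, pderiv_pow, mul_zero, zero_mul, zero_add]
    ring

theorem lowering_mem_varPowIdeal {a : σ → ℕ} {f : MvPolynomial σ K} (hf : f ∈ varPowIdeal K a) :
    lowering a f ∈ varPowIdeal K a := by
  obtain ⟨c, rfl⟩ := Ideal.mem_span_range_iff_exists_fun.1 hf
  rw [map_sum]
  refine Ideal.sum_mem _ fun j _ => ?_
  rw [mul_comm]
  exact Ideal.mem_of_dvd _ (dvd_lowering_X_pow_mul a j (c j)) (Ideal.subset_span ⟨j, rfl⟩)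

theorem isHomogeneous_lowering (a : σ → ℕ) {n : ℕ} {f : MvPolynomial σ K}
    (hf : f.IsHomogeneous (n + 1)) : (lowering a f).IsHomogeneous n := by
  rw [lowering_apply]
  refine IsHomogeneous.sum _ _ _ fun i _ => ?_
  have pderiv_hom : (pderiv i f).IsHomogeneous n := hf.pderiv
  rw [← map_natCast C]
  exact (pderiv_hom.C_mul _).sub (isHomogeneous_X_mul_pderiv i pderiv_hom)

theorem lowering_eq_zero_of_isHomogeneous_zero (a : σ → ℕ) {f : MvPolynomial σ K}
    (hf : f.IsHomogeneous 0) : lowering a f = 0 := by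
  rw [totalDegree_eq_zero_iff_eq_C.1 (Nat.le_zero.1 hf.totalDegree_le), lowering_apply]
  simp

theorem isSl2Pair_mulLeft_lowering (a : σ → ℕ) :
    IsSl2Pair (LinearMap.mulLeft K (∑ i, X i)) (lowering a) (homogeneousSubmodule σ K)
      (∑ i, a i) where
  raise_mem {n f} hf := by
    rw [add_comm]
    exact (IsHomogeneous.sum _ _ _ fun i _ => isHomogeneous_X _ _).mul hf
  lower_mem := isHomogeneous_lowering a
  lower_zero := lowering_eq_zero_of_isHomogeneous_zero a
  lower_raise := lowering_sum_X_mul a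

variable {K : Type*} [Field K] [CharZero K] {a : σ → ℕ} {n k : ℕ} {f : MvPolynomial σ K}

theorem mem_varPowIdeal_of_sum_X_pow_mul_mem (hk : 2 * n + k ≤ ∑ i, a i)
    (hf : f.IsHomogeneous n) (h : (∑ i, X i) ^ k * f ∈ varPowIdeal K a) :
    f ∈ varPowIdeal K a := by
  refine (isSl2Pair_mulLeft_lowering a).mem_of_pow_raise_mem
    (N := (varPowIdeal K a).restrictScalars K) (fun _ hg => Ideal.mul_mem_left _ _ hg)
    (fun _ hg => lowering_mem_varPowIdeal hg) hk hf ?_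
  rwa [LinearMap.pow_mulLeft]

theorem exists_sub_sum_X_pow_mul_mem_varPowIdeal (hk : ∑ i, a i ≤ 2 * n + k)
    (hf : f.IsHomogeneous (n + k)) :
    ∃ g : MvPolynomial σ K, g.IsHomogeneous n ∧ f - (∑ i, X i) ^ k * g ∈ varPowIdeal K a := by
  obtain ⟨g, hg, hgf⟩ := (isSl2Pair_mulLeft_lowering a).exists_sub_pow_raise_mem
    (N := (varPowIdeal K a).restrictScalars K) (fun _ hg => Ideal.mul_mem_left _ _ hg)
    (fun _ hg => lowering_mem_varPowIdeal hg)
    (fun m hm g hg => mem_varPowIdeal_of_isHomogeneous hm hg) hk hf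
  rw [LinearMap.pow_mulLeft] at hgf
  exact ⟨g, hg, hgf⟩

end MonomialCompleteIntersection

section GradedModule

open DirectSum

variable {R M σR σM : Type*} [CommRing R] [AddCommGroup M] [Module R M]
  [SetLike σR R] [SetLike σM M] [AddSubgroupClass σM M] {ℳ : ℕ → σM} [Decomposition ℳ]

theorem coe_decompose_smul_of_left_mem {𝓡 : ℕ → σR} [SetLike.GradedSMul 𝓡 ℳ] {i : ℕ} {r : R}
    (hr : r ∈ 𝓡 i) (x : M) (n : ℕ) :
    (decompose ℳ (r • x) n : M) = if i ≤ n then r • (decompose ℳ x (n - i) : M) else 0 := by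
  induction x using Decomposition.inductionOn ℳ with
  | zero => simp
  | @homogeneous j x =>
    have hrx : r • (x : M) ∈ ℳ (i + j) := SetLike.GradedSMul.smul_mem hr x.2
    rw [decompose_of_mem ℳ hrx, decompose_coe, coe_of_apply, coe_of_apply]
    split_ifs <;> first | rfl | omega | simp
  | add x y hx hy =>
    rw [smul_add, decompose_add, decompose_add, DirectSum.add_apply, DirectSum.add_apply,
      AddMemClass.coe_add, hx, hy]
    split_ifs <;> simp

theorem decompose_mem_of_sub_smul_mem {𝓡 : ℕ → σR} [SetLike.GradedSMul 𝓡 ℳ] {N : Submodule R M}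
    (hN : N.IsHomogeneous ℳ) {i n : ℕ} {r : R} (hr : r ∈ 𝓡 i) (hn : n < i) {x z : M}
    (h : x - r • z ∈ N) : (decompose ℳ x n : M) ∈ N := by
  have := hN n h
  rwa [decompose_sub, DirectSum.sub_apply, AddSubgroupClass.coe_sub,
    coe_decompose_smul_of_left_mem hr, if_neg hn.not_ge, sub_zero] at this

theorem exists_sub_smul_mem {𝓡 : ℕ → σR} [SetLike.GradedSMul 𝓡 ℳ] {N : Submodule R M}
    (hN : N.IsHomogeneous ℳ) {i n : ℕ} {r : R} (hr : r ∈ 𝓡 i) {x z : M}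
    (hx : x ∈ ℳ (i + n)) (h : x - r • z ∈ N) : ∃ y ∈ ℳ n, x - r • y ∈ N := by
  have := hN (i + n) h
  rw [decompose_sub, DirectSum.sub_apply, AddSubgroupClass.coe_sub, decompose_of_mem_same ℳ hx,
    coe_decompose_smul_of_left_mem hr, if_pos le_self_add, Nat.add_sub_cancel_left] at this
  exact ⟨_, SetLike.coe_mem _, this⟩

variable [AddSubmonoidClass σR R]

theorem coe_decompose_smul_mem (𝓡 : ℕ → σR) [GradedRing 𝓡] [SetLike.GradedSMul 𝓡 ℳ]
    {N : Submodule R M} (r : R) {x : M} (hx : ∀ n, (decompose ℳ x n : M) ∈ N) (n : ℕ) :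
    (decompose ℳ (r • x) n : M) ∈ N := by
  induction r using Decomposition.inductionOn 𝓡 with
  | zero => simp
  | homogeneous r =>
    rw [coe_decompose_smul_of_left_mem r.2]
    split_ifs
    exacts [N.smul_mem _ (hx _), N.zero_mem]
  | add r s hr hs =>
    rw [add_smul, decompose_add, DirectSum.add_apply, AddMemClass.coe_add]
    exact N.add_mem hr hs

theorem isHomogeneous_span_range (𝓡 : ℕ → σR) [GradedRing 𝓡] [SetLike.GradedSMul 𝓡 ℳ]
    {ι : Type*} {e : ι → M} {δ : ι → ℕ} (he : ∀ k, e k ∈ ℳ (δ k)) :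
    (Submodule.span R (Set.range e)).IsHomogeneous ℳ := by
  intro n x hx
  induction hx using Submodule.span_induction generalizing n with
  | mem x hx =>
    obtain ⟨k, rfl⟩ := hx
    rcases eq_or_ne (δ k) n with rfl | hn
    · rw [decompose_of_mem_same ℳ (he k)]
      exact Submodule.subset_span ⟨k, rfl⟩
    · rw [decompose_of_mem_ne ℳ (he k) hn]
      exact zero_mem _
  | zero => simp
  | add x y _ _ hx hy =>
    rw [decompose_add, DirectSum.add_apply, AddMemClass.coe_add]
    exact add_mem (hx n) (hy n)
  | smul r x _ hx => exact coe_decompose_smul_mem 𝓡 r hx n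

variable {𝓡 : ℕ → σR} [GradedRing 𝓡] [SetLike.GradedSMul 𝓡 ℳ]

theorem coe_decompose_smul_of_right_mem (r : R) {j : ℕ} {x : M} (hx : x ∈ ℳ j) (n : ℕ) :
    (decompose ℳ (r • x) n : M) = if j ≤ n then (decompose 𝓡 r (n - j) : R) • x else 0 := by
  induction r using Decomposition.inductionOn 𝓡 with
  | zero => simp
  | @homogeneous i r =>
    rw [coe_decompose_smul_of_left_mem r.2, decompose_of_mem ℳ hx, decompose_coe, coe_of_apply,
      coe_of_apply]
    split_ifs <;> first | rfl | omega | simp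
  | add r s hr hs =>
    rw [add_smul, decompose_add, decompose_add, DirectSum.add_apply, DirectSum.add_apply,
      AddMemClass.coe_add, hr, hs]
    split_ifs <;> simp [add_smul]

theorem isHomogeneous_ideal_smul_top {I : Ideal R} (hI : I.IsHomogeneous 𝓡) :
    (I • ⊤ : Submodule R M).IsHomogeneous ℳ := by
  intro n x hx
  induction hx using Submodule.smul_induction_on' with
  | smul r hr x _ =>
    induction x using Decomposition.inductionOn ℳ with
    | zero => simp
    | homogeneous x =>
      rw [coe_decompose_smul_of_right_mem (𝓡 := 𝓡) r x.2]
      split_ifs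
      exacts [Submodule.smul_mem_smul (hI _ hr) Submodule.mem_top, zero_mem _]
    | add x y hx hy =>
      rw [smul_add, decompose_add, DirectSum.add_apply, AddMemClass.coe_add]
      exact add_mem (hx trivial) (hy trivial)
  | add x _ y _ hx hy =>
    rw [decompose_add, DirectSum.add_apply, AddMemClass.coe_add]
    exact add_mem hx hy

theorem eq_top_of_sup_smul_top_eq_top {N : Submodule R M} (hN : N.IsHomogeneous ℳ) {I : Ideal R}
    (hI : I ≤ (HomogeneousIdeal.irrelevant 𝓡).toIdeal) (h : N ⊔ I • ⊤ = ⊤) : N = ⊤ := by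
  suffices ∀ n x, (decompose ℳ x n : M) ∈ N from
    eq_top_iff.2 fun x _ => (hN.mem_iff ℳ).2 fun n => this n x
  intro n
  induction n using Nat.strong_induction_on with
  | _ n ih =>
    have positive_smul_mem (r : R) (hr : r ∈ HomogeneousIdeal.irrelevant 𝓡) (x : M) :
        (decompose ℳ (r • x) n : M) ∈ N := by
      replace hr : r ∈ AddSubmonoid.closure (⋃ i > 0, (𝓡 i : Set R)) := by
        rwa [← HomogeneousIdeal.irrelevant_eq_closure]
      induction hr using AddSubmonoid.closure_induction with
      | mem r hr =>
        obtain ⟨i, hi, hr⟩ := Set.mem_iUnion₂.1 hr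
        rw [coe_decompose_smul_of_left_mem hr]
        split_ifs
        exacts [N.smul_mem _ (ih _ (by omega) _), N.zero_mem]
      | zero => simp
      | add r s _ _ hr hs =>
        rw [add_smul, decompose_add, DirectSum.add_apply, AddMemClass.coe_add]
        exact N.add_mem hr hs
    have smul_top_mem (x : M) (hx : x ∈ I • (⊤ : Submodule R M)) :
        (decompose ℳ x n : M) ∈ N := by
      induction hx using Submodule.smul_induction_on' with
      | smul r hr x _ => exact positive_smul_mem r (hI hr) x
      | add x _ y _ hx hy =>
        rw [decompose_add, DirectSum.add_apply, AddMemClass.coe_add]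
        exact N.add_mem hx hy
    intro x
    obtain ⟨y, hy, z, hz, rfl⟩ := Submodule.mem_sup.1 (h.ge (Submodule.mem_top (x := x)))
    rw [decompose_add, DirectSum.add_apply, AddMemClass.coe_add]
    exact N.add_mem (hN n hy) (smul_top_mem z hz)

theorem mem_of_forall_exists_sub_pow_smul_mem {N : Submodule R M} (hN : N.IsHomogeneous ℳ) {r : R}
    (hr : r ∈ 𝓡 1) {x : M} (h : ∀ m, ∃ z, x - r ^ m • z ∈ N) : x ∈ N := by
  refine (hN.mem_iff ℳ).2 fun n => ?_
  obtain ⟨z, hz⟩ := h (n + 1)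
  have hpow : r ^ (n + 1) ∈ 𝓡 (n + 1) := by simpa using SetLike.pow_mem_graded (n + 1) hr
  exact decompose_mem_of_sub_smul_mem hN hpow n.lt_succ_self hz

section Basis

variable {ι : Type*} {b : Module.Basis ι R M} {δ : ι → ℕ}

theorem repr_coe_decompose (hb : ∀ k, b k ∈ ℳ (δ k)) (x : M) (n : ℕ) (k : ι) :
    b.repr (decompose ℳ x n) k =
      if δ k ≤ n then (decompose 𝓡 (b.repr x k) (n - δ k) : R) else 0 := by
  obtain ⟨f, rfl⟩ := b.repr.symm.surjective x
  induction f using Finsupp.induction_linear with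
  | zero => simp
  | add f g hf hg =>
    rw [map_add, decompose_add, DirectSum.add_apply, AddMemClass.coe_add, map_add,
      Finsupp.add_apply, hf, hg, map_add, Finsupp.add_apply, decompose_add, DirectSum.add_apply,
      AddMemClass.coe_add]
    split_ifs <;> simp
  | single j r =>
    rw [b.repr_symm_single, coe_decompose_smul_of_right_mem (𝓡 := 𝓡) r (hb j), map_smul,
      b.repr_self]
    rcases eq_or_ne j k with rfl | hjk
    · split_ifs <;> simp
    · split_ifs <;> simp [Finsupp.single_eq_of_ne' hjk]

theorem repr_mem_of_le (hb : ∀ k, b k ∈ ℳ (δ k)) {x : M} {n : ℕ} (hx : x ∈ ℳ n) {k : ι}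
    (hk : δ k ≤ n) : b.repr x k ∈ 𝓡 (n - δ k) := by
  have := repr_coe_decompose (𝓡 := 𝓡) hb x n k
  rw [decompose_of_mem_same ℳ hx, if_pos hk] at this
  exact this ▸ SetLike.coe_mem _

theorem repr_eq_zero_of_lt (𝓡 : ℕ → σR) [GradedRing 𝓡] [SetLike.GradedSMul 𝓡 ℳ]
    (hb : ∀ k, b k ∈ ℳ (δ k)) {x : M} {n : ℕ} (hx : x ∈ ℳ n) {k : ι}
    (hk : n < δ k) : b.repr x k = 0 := by
  have := repr_coe_decompose (𝓡 := 𝓡) hb x n k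
  rwa [decompose_of_mem_same ℳ hx, if_neg hk.not_ge] at this

theorem mem_smul_top_iff_repr_mem {I : Ideal R} {x : M} :
    x ∈ (I • ⊤ : Submodule R M) ↔ ∀ k, b.repr x k ∈ I := by
  rw [← b.span_eq, Submodule.mem_ideal_smul_span_iff_exists_sum]
  constructor
  · rintro ⟨a, ha, rfl⟩ k
    rw [← Finsupp.linearCombination_apply, b.repr_linearCombination]
    exact ha k
  · intro h
    exact ⟨b.repr x, h, b.linearCombination_repr x⟩

end Basis

end GradedModule

section HomogeneousBasis

open DirectSum RingTheory.Sequence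

section LinearIndependentMod

variable {R M ι : Type*} [CommRing R] [AddCommGroup M] [Module R M]

/-- The images of the `e k` in `M ⧸ I • ⊤` are linearly independent over `R ⧸ I`. The coefficients
are taken in `R`, which avoids the towers of quotients occurring for a regular sequence. -/
def LinearIndependentMod (I : Ideal R) (e : ι → M) : Prop :=
  ∀ (s : Finset ι) (p : ι → R), ∑ k ∈ s, p k • e k ∈ (I • ⊤ : Submodule R M) → ∀ k ∈ s, p k ∈ I

variable {e : ι → M}

theorem linearIndependentMod_bot_iff :
    LinearIndependentMod (⊥ : Ideal R) e ↔ LinearIndependent R e := by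
  simp only [LinearIndependentMod, linearIndependent_iff', Submodule.bot_smul, Submodule.mem_bot]

theorem linearIndependentMod_of_linearIndependent_mk {K : Type*} [Field K] [Algebra K R]
    [Module K M] [IsScalarTower K R M] {I : Ideal R}
    (hI : ∀ p : R, ∃ c : K, p - algebraMap K R c ∈ I)
    (he : LinearIndependent K ((I • ⊤ : Submodule R M).mkQ ∘ e)) : LinearIndependentMod I e := by
  intro s p hp k hk
  choose c hc using hI
  have sum_smul_mem : ∑ k ∈ s, c (p k) • e k ∈ (I • ⊤ : Submodule R M) := by
    have sum_sub_mem : ∑ k ∈ s, (p k - algebraMap K R (c (p k))) • e k ∈ (I • ⊤ : Submodule R M) :=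
      Submodule.sum_mem _ fun k _ => Submodule.smul_mem_smul (hc _) Submodule.mem_top
    simpa only [sub_smul, Finset.sum_sub_distrib, algebraMap_smul, sub_sub_cancel] using
      Submodule.sub_mem _ hp sum_sub_mem
  have coeff_eq_zero : c (p k) = 0 := by
    refine linearIndependent_iff'.1 he s (fun k => c (p k)) ?_ k hk
    rw [← Submodule.Quotient.mk_eq_zero] at sum_smul_mem
    rw [← sum_smul_mem, ← Submodule.mkQ_apply, map_sum]
    rfl
  simpa only [coeff_eq_zero, map_zero, sub_zero] using hc (p k)

variable {σR : Type*} [SetLike σR R] [AddSubgroupClass σR R] (𝓡 : ℕ → σR) [GradedRing 𝓡]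

-- Dividing a relation by `t` as often as one likes shows that its coefficients lie in
-- `I + (t ^ m)` for all `m`, hence in the homogeneous ideal `I`.
theorem LinearIndependentMod.of_sup_span_singleton {I : Ideal R} (hI : I.IsHomogeneous 𝓡) {t : R}
    (ht : t ∈ 𝓡 1) (hreg : IsSMulRegular (M ⧸ (I • ⊤ : Submodule R M)) t)
    (h : LinearIndependentMod (I ⊔ Ideal.span {t}) e) : LinearIndependentMod I e := by
  have exists_sub_pow_mul_mem (m : ℕ) : ∀ (s : Finset ι) (p : ι → R),
      ∑ k ∈ s, p k • e k ∈ (I • ⊤ : Submodule R M) → ∀ k ∈ s, ∃ q, p k - t ^ m * q ∈ I := by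
    induction m with
    | zero => exact fun s p _ k _ => ⟨p k, by simp⟩
    | succ m ih =>
      intro s p hp
      have exists_sub_mul_mem (k : ι) : ∃ q, k ∈ s → p k - t * q ∈ I := by
        by_cases hk : k ∈ s
        · have := h s p (Submodule.smul_mono_left le_sup_left hp) k hk
          obtain ⟨a, ha, y, hy, hay⟩ := Submodule.mem_sup.1 this
          obtain ⟨q, rfl⟩ := Ideal.mem_span_singleton'.1 hy
          exact ⟨q, fun _ => by rwa [← hay, mul_comm t, add_sub_cancel_right]⟩
        · exact ⟨0, fun hk' => absurd hk' hk⟩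
      choose q hq using exists_sub_mul_mem
      have sum_mem : ∑ k ∈ s, q k • e k ∈ (I • ⊤ : Submodule R M) := by
        have sum_sub_mem : ∑ k ∈ s, (p k - t * q k) • e k ∈ (I • ⊤ : Submodule R M) :=
          Submodule.sum_mem _ fun k hk => Submodule.smul_mem_smul (hq k hk) Submodule.mem_top
        rw [← Submodule.Quotient.mk_eq_zero]
        refine hreg.right_eq_zero_of_smul ?_
        rw [← Submodule.Quotient.mk_smul, Submodule.Quotient.mk_eq_zero]
        simpa only [sub_smul, mul_smul, Finset.sum_sub_distrib, ← Finset.smul_sum, sub_sub_cancel]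
          using Submodule.sub_mem _ hp sum_sub_mem
      intro k hk
      obtain ⟨q', hq'⟩ := ih s q sum_mem k hk
      refine ⟨q', ?_⟩
      convert I.add_mem (hq k hk) (I.mul_mem_left t hq') using 1
      ring
  exact fun s p hp k hk => mem_of_forall_exists_sub_pow_smul_mem hI ht
    fun m => exists_sub_pow_mul_mem m s p hp k hk

theorem isHomogeneous_ofList {rs : List R} (hrs : ∀ t ∈ rs, t ∈ 𝓡 1) :
    (Ideal.ofList rs).IsHomogeneous 𝓡 :=
  Ideal.homogeneous_span 𝓡 _ fun t ht => ⟨1, hrs t ht⟩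

theorem LinearIndependentMod.linearIndependent {rs : List R} (hrs : ∀ t ∈ rs, t ∈ 𝓡 1)
    (hreg : IsWeaklyRegular M rs) (h : LinearIndependentMod (Ideal.ofList rs) e) :
    LinearIndependent R e := by
  induction rs using List.reverseRecOn with
  | nil => rwa [Ideal.ofList_nil, linearIndependentMod_bot_iff] at h
  | append_singleton rs t ih =>
    rw [isWeaklyRegular_append_iff, isWeaklyRegular_singleton_iff] at hreg
    rw [Ideal.ofList_append, Ideal.ofList_singleton] at h
    have hrs' : ∀ u ∈ rs, u ∈ 𝓡 1 := fun u hu => hrs u (List.mem_append_left _ hu)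
    exact ih hrs' hreg.1 (h.of_sup_span_singleton 𝓡 (isHomogeneous_ofList 𝓡 hrs')
      (hrs t (by simp)) hreg.2)

end LinearIndependentMod

variable {K σM : Type*} {M : Type u} [Field K] [AddCommGroup M] [Module K M] [SetLike σM M]
  [AddSubgroupClass σM M] (ℳ : ℕ → σM) [Decomposition ℳ]

theorem exists_homogeneous_lift_of_basis {V : Type*} [AddCommGroup V] [Module K V]
    {f : M →ₗ[K] V} (hf : Function.Surjective f) :
    ∃ (ι : Type u) (δ : ι → ℕ) (e : ι → M), (∀ k, e k ∈ ℳ (δ k)) ∧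
      LinearIndependent K (f ∘ e) ∧ Submodule.span K (Set.range (f ∘ e)) = ⊤ := by
  obtain ⟨ι, a, -, hspan, hli⟩ := exists_linearIndependent' K fun x : Σ n, ℳ n => f x.2
  refine ⟨ι, fun k => (a k).1, fun k => (a k).2, fun k => (a k).2.2, hli,
    hspan.trans (eq_top_iff.2 ?_)⟩
  rintro v -
  obtain ⟨x, rfl⟩ := hf v
  induction x using Decomposition.inductionOn ℳ with
  | zero => simp
  | @homogeneous n x => exact Submodule.subset_span ⟨⟨n, x⟩, rfl⟩
  | add x y hx hy => rw [map_add]; exact add_mem hx hy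

variable {R σR : Type*} [CommRing R] [Algebra K R] [Module R M] [IsScalarTower K R M]
  [SetLike σR R] [AddSubgroupClass σR R] (𝓡 : ℕ → σR) [GradedRing 𝓡] [SetLike.GradedSMul 𝓡 ℳ]

theorem exists_homogeneous_basis {rs : List R} (hrs : ∀ t ∈ rs, t ∈ 𝓡 1)
    (hK : ∀ p : R, ∃ c : K, p - algebraMap K R c ∈ Ideal.ofList rs)
    (hreg : IsWeaklyRegular M rs) :
    ∃ (ι : Type u) (δ : ι → ℕ) (b : Module.Basis ι R M), ∀ k, b k ∈ ℳ (δ k) ∧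
      b k ∉ (Ideal.ofList rs • ⊤ : Submodule R M) := by
  set N : Submodule R M := Ideal.ofList rs • ⊤
  obtain ⟨ι, δ, e, he, hli, hspan⟩ := exists_homogeneous_lift_of_basis ℳ
    (f := N.mkQ.restrictScalars K) N.mkQ_surjective
  have linearIndependent : LinearIndependent R e :=
    (linearIndependentMod_of_linearIndependent_mk hK hli).linearIndependent 𝓡 hrs hreg
  have span_sup_eq_top : Submodule.span R (Set.range e) ⊔ N = ⊤ := by
    rw [Set.range_comp, ← Submodule.map_span] at hspan
    refine eq_top_iff.2 fun x _ => ?_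
    obtain ⟨y, hy, hyx⟩ := hspan.ge (Submodule.mem_top (x := N.mkQ x))
    rw [← add_sub_cancel y x]
    exact Submodule.add_mem_sup (Submodule.span_le_restrictScalars K R _ hy)
      ((Submodule.Quotient.eq N).1 hyx.symm)
  have span_eq_top : Submodule.span R (Set.range e) = ⊤ :=
    eq_top_of_sup_smul_top_eq_top (isHomogeneous_span_range 𝓡 he)
      (Ideal.span_le.2 fun t ht => HomogeneousIdeal.mem_irrelevant_of_mem 𝓡 one_pos (hrs t ht))
      span_sup_eq_top
  refine ⟨ι, δ, .mk linearIndependent span_eq_top.ge, fun k => ?_⟩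
  rw [Module.Basis.mk_apply]
  exact ⟨he k, fun hk => hli.ne_zero k ((Submodule.Quotient.mk_eq_zero N).2 hk)⟩

end HomogeneousBasis

section LefschetzTransfer

open MvPolynomial

attribute [local instance] MvPolynomial.gradedAlgebra

variable {K σ M σM ι : Type*} [Field K] [CharZero K] [Fintype σ] [AddCommGroup M]
  [Module (MvPolynomial σ K) M] [SetLike σM M] [AddSubgroupClass σM M] {ℳ : ℕ → σM}
  [DirectSum.Decomposition ℳ] [SetLike.GradedSMul (homogeneousSubmodule σ K) ℳ]
  {b : Module.Basis ι (MvPolynomial σ K) M} {δ : ι → ℕ} {a : σ → ℕ} {n k : ℕ}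

theorem mem_varPowIdeal_smul_top_of_sum_X_pow_smul_mem (hb : ∀ j, b j ∈ ℳ (δ j))
    (hk : 2 * n + k ≤ ∑ i, a i) {x : M} (hx : x ∈ ℳ n)
    (h : (∑ i, X i : MvPolynomial σ K) ^ k • x ∈
      varPowIdeal K a • (⊤ : Submodule (MvPolynomial σ K) M)) :
    x ∈ varPowIdeal K a • (⊤ : Submodule (MvPolynomial σ K) M) := by
  rw [mem_smul_top_iff_repr_mem (b := b)] at h ⊢
  intro j
  rcases le_or_gt (δ j) n with hj | hj
  · refine mem_varPowIdeal_of_sum_X_pow_mul_mem (n := n - δ j) (k := k) (by omega)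
      (repr_mem_of_le (𝓡 := homogeneousSubmodule σ K) hb hx hj) ?_
    simpa using h j
  · rw [repr_eq_zero_of_lt (homogeneousSubmodule σ K) hb hx hj]
    exact zero_mem _

theorem exists_sub_sum_X_pow_smul_mem_varPowIdeal_smul_top (hb : ∀ j, b j ∈ ℳ (δ j)) {s : ℕ}
    (hδ : ∀ j, δ j ≤ s) (hk : ∑ i, a i + 2 * s ≤ 2 * n + k) {y : M} (hy : y ∈ ℳ (n + k)) :
    ∃ x ∈ ℳ n, y - (∑ i, X i : MvPolynomial σ K) ^ k • x ∈
      varPowIdeal K a • (⊤ : Submodule (MvPolynomial σ K) M) := by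
  have exists_coord (j : ι) : ∃ x ∈ ℳ n,
      b.repr y j • b j - (∑ i, X i : MvPolynomial σ K) ^ k • x ∈
        varPowIdeal K a • (⊤ : Submodule (MvPolynomial σ K) M) := by
    have := hδ j
    rcases le_or_gt (δ j) n with hj | hj
    · have coord_hom : (b.repr y j).IsHomogeneous (n - δ j + k) := by
        rw [← Nat.sub_add_comm hj]
        exact repr_mem_of_le (𝓡 := homogeneousSubmodule σ K) hb hy (by omega)
      obtain ⟨g, hg, hgy⟩ := exists_sub_sum_X_pow_mul_mem_varPowIdeal (a := a)
        (n := n - δ j) (by omega) coord_hom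
      refine ⟨g • b j, ?_, ?_⟩
      · simpa [hj] using SetLike.GradedSMul.smul_mem (A := homogeneousSubmodule σ K) hg (hb j)
      · rw [← mul_smul, ← sub_smul]
        exact Submodule.smul_mem_smul hgy Submodule.mem_top
    · refine ⟨0, zero_mem _, ?_⟩
      rw [smul_zero, sub_zero]
      refine Submodule.smul_mem_smul ?_ Submodule.mem_top
      rcases le_or_gt (δ j) (n + k) with hjk | hjk
      · exact mem_varPowIdeal_of_isHomogeneous (n := n + k - δ j) (by omega)
          (repr_mem_of_le (𝓡 := homogeneousSubmodule σ K) hb hy hjk)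
      · rw [repr_eq_zero_of_lt (homogeneousSubmodule σ K) hb hy hjk]
        exact zero_mem _
  choose x hx hxy using exists_coord
  refine ⟨∑ j ∈ (b.repr y).support, x j, sum_mem fun j _ => hx j, ?_⟩
  nth_rw 1 [← b.linearCombination_repr y]
  rw [Finsupp.linearCombination_apply, Finsupp.sum, Finset.smul_sum, ← Finset.sum_sub_distrib]
  exact Submodule.sum_mem _ fun j _ => hxy j

end LefschetzTransfer

section HilbertSeries

theorem finrank_map_add_finrank_inf_ker {K V W : Type*} [Field K] [AddCommGroup V] [Module K V]
    [AddCommGroup W] [Module K W] (f : V →ₗ[K] W) (U : Submodule K V) [FiniteDimensional K U] :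
    Module.finrank K (U.map f) + Module.finrank K (U ⊓ f.ker : Submodule K V) =
      Module.finrank K U := by
  rw [← LinearMap.finrank_range_add_finrank_ker (f.domRestrict U), LinearMap.range_domRestrict,
    LinearMap.ker_domRestrict, ← Submodule.finrank_map_subtype_eq, Submodule.map_comap_subtype]

open RingTheory.Sequence

variable {K R M : Type*} [Field K] [CommRing R] [AddCommGroup M] [Module K M] [Module R M]
  [Algebra K R] [IsScalarTower K R M]

/-- The degree-`n` component of `M ⧸ N`, for `N` a homogeneous submodule of a graded module `M`. -/
def quotientComponent (ℳ : ℕ → Submodule K M) (N : Submodule R M) (n : ℕ) : Submodule K (M ⧸ N) :=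
  (ℳ n).map (N.mkQ.restrictScalars K)

/-- The Hilbert series of `M ⧸ N`, for `N` a homogeneous submodule of a graded module `M`. The
coefficients are integers, so that it can be multiplied by `1 - X`. -/
noncomputable def hilbertSeries (ℳ : ℕ → Submodule K M) (N : Submodule R M) : PowerSeries ℤ :=
  .mk fun n => Module.finrank K (quotientComponent ℳ N n)

variable {ℳ : ℕ → Submodule K M}

theorem mem_quotientComponent {N : Submodule R M} {n : ℕ} {y : M ⧸ N} :
    y ∈ quotientComponent ℳ N n ↔ ∃ x ∈ ℳ n, N.mkQ x = y :=
  Iff.rfl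

theorem hilbertSeries_bot :
    hilbertSeries ℳ (⊥ : Submodule R M) = .mk fun n => (Module.finrank K (ℳ n) : ℤ) := by
  ext n
  have injective : Function.Injective ((⊥ : Submodule R M).mkQ.restrictScalars K) :=
    LinearMap.ker_eq_bot.1 (Submodule.ker_mkQ ⊥)
  rw [hilbertSeries, PowerSeries.coeff_mk, PowerSeries.coeff_mk, quotientComponent,
    ((ℳ n).equivMapOfInjective _ injective).finrank_eq]

theorem le_of_coeff_hilbertSeries_eq_zero {N : Submodule R M} {n : ℕ} [FiniteDimensional K (ℳ n)]
    (h : PowerSeries.coeff n (hilbertSeries ℳ N) = 0) : ℳ n ≤ N.restrictScalars K := by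
  rw [hilbertSeries, PowerSeries.coeff_mk, Nat.cast_eq_zero, quotientComponent,
    Submodule.finrank_eq_zero, ← LinearMap.le_ker_iff_map] at h
  exact fun x hx => (Submodule.Quotient.mk_eq_zero N).1 (h hx)

/-- The projection `M ⧸ N → M ⧸ (N + tM)`, as a `K`-linear map so that ranks can be compared. -/
def factorSupSMulTop (K : Type*) {R M : Type*} [Field K] [CommRing R] [AddCommGroup M] [Module K M]
    [Module R M] [Algebra K R] [IsScalarTower K R M] (N : Submodule R M) (t : R) :
    (M ⧸ N) →ₗ[K] M ⧸ (N ⊔ Ideal.span {t} • ⊤) :=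
  (Submodule.factor le_sup_left).restrictScalars K

variable {N : Submodule R M} {t : R}

theorem map_factorSupSMulTop_quotientComponent (n : ℕ) :
    (quotientComponent ℳ N n).map (factorSupSMulTop K N t) =
      quotientComponent ℳ (N ⊔ Ideal.span {t} • ⊤) n := by
  rw [quotientComponent, ← Submodule.map_comp]
  rfl

theorem factorSupSMulTop_mkQ_eq_zero_iff {x : M} :
    factorSupSMulTop K N t (N.mkQ x) = 0 ↔ ∃ z, x - t • z ∈ N := by
  rw [factorSupSMulTop, LinearMap.restrictScalars_apply, Submodule.factor_mk, Submodule.mkQ_apply,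
    Submodule.Quotient.mk_eq_zero, Submodule.mem_sup, Submodule.ideal_span_singleton_smul]
  constructor
  · rintro ⟨y, hy, _, hz, rfl⟩
    obtain ⟨z, -, rfl⟩ := (Submodule.mem_smul_pointwise_iff_exists _ _ _).1 hz
    exact ⟨z, by simpa using hy⟩
  · rintro ⟨z, hz⟩
    exact ⟨_, hz, _, Submodule.smul_mem_pointwise_smul _ _ _ Submodule.mem_top, sub_add_cancel _ _⟩

variable {σR : Type*} [SetLike σR R] {𝓡 : ℕ → σR} [DirectSum.Decomposition ℳ]
  [SetLike.GradedSMul 𝓡 ℳ]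

theorem quotientComponent_zero_inf_ker (hN : N.IsHomogeneous ℳ) (ht : t ∈ 𝓡 1) :
    quotientComponent ℳ N 0 ⊓ (factorSupSMulTop K N t).ker = ⊥ := by
  refine (Submodule.eq_bot_iff _).2 fun y hy => ?_
  rw [Submodule.mem_inf, LinearMap.mem_ker] at hy
  obtain ⟨hy, hker⟩ := hy
  obtain ⟨x, hx, rfl⟩ := mem_quotientComponent.1 hy
  obtain ⟨z, hz⟩ := factorSupSMulTop_mkQ_eq_zero_iff.1 hker
  have := decompose_mem_of_sub_smul_mem hN ht one_pos hz
  rw [DirectSum.decompose_of_mem_same ℳ hx] at this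
  exact (Submodule.Quotient.mk_eq_zero N).2 this

theorem quotientComponent_succ_inf_ker (hN : N.IsHomogeneous ℳ) (ht : t ∈ 𝓡 1) (n : ℕ) :
    quotientComponent ℳ N (n + 1) ⊓ (factorSupSMulTop K N t).ker =
      (quotientComponent ℳ N n).map ((LinearMap.lsmul R (M ⧸ N) t).restrictScalars K) := by
  ext y
  rw [Submodule.mem_inf, Submodule.mem_map, LinearMap.mem_ker]
  constructor
  · rintro ⟨hy, hker⟩
    obtain ⟨x, hx, rfl⟩ := mem_quotientComponent.1 hy
    obtain ⟨z, hz⟩ := factorSupSMulTop_mkQ_eq_zero_iff.1 hker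
    obtain ⟨y, hy, hxy⟩ := exists_sub_smul_mem hN ht (add_comm n 1 ▸ hx) hz
    exact ⟨_, ⟨y, hy, rfl⟩, ((Submodule.Quotient.eq N).2 hxy).symm⟩
  · rintro ⟨_, hmem, rfl⟩
    obtain ⟨z, hz, rfl⟩ := mem_quotientComponent.1 hmem
    refine ⟨mem_quotientComponent.2 ⟨t • z, ?_, rfl⟩,
      factorSupSMulTop_mkQ_eq_zero_iff.2 ⟨z, by simp only [sub_self, zero_mem]⟩⟩
    exact add_comm 1 n ▸ SetLike.GradedSMul.smul_mem (B := ℳ) ht hz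

theorem hilbertSeries_sup_span_smul_top [∀ n, FiniteDimensional K (ℳ n)]
    (hN : N.IsHomogeneous ℳ) (ht : t ∈ 𝓡 1) (hreg : IsSMulRegular (M ⧸ N) t) :
    hilbertSeries ℳ (N ⊔ Ideal.span {t} • ⊤) = hilbertSeries ℳ N * (1 - PowerSeries.X) := by
  have (n : ℕ) : FiniteDimensional K (quotientComponent ℳ N n) :=
    inferInstanceAs (FiniteDimensional K ((ℳ n).map (N.mkQ.restrictScalars K)))
  have rank_nullity (n : ℕ) :
      Module.finrank K (quotientComponent ℳ (N ⊔ Ideal.span {t} • ⊤) n) +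
        Module.finrank K (quotientComponent ℳ N n ⊓ (factorSupSMulTop K N t).ker :) =
          Module.finrank K (quotientComponent ℳ N n) := by
    rw [← map_factorSupSMulTop_quotientComponent]
    exact finrank_map_add_finrank_inf_ker _ _
  have injective : Function.Injective ((LinearMap.lsmul R (M ⧸ N) t).restrictScalars K) := hreg
  ext n
  rw [mul_sub, mul_one, map_sub]
  cases n with
  | zero =>
    have := rank_nullity 0
    rw [quotientComponent_zero_inf_ker hN ht, finrank_bot, add_zero] at this
    simpa [hilbertSeries] using this
  | succ n =>
    have := rank_nullity (n + 1)
    rw [quotientComponent_succ_inf_ker hN ht,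
      ← ((quotientComponent ℳ N n).equivMapOfInjective _ injective).finrank_eq] at this
    rw [PowerSeries.coeff_succ_mul_X]
    simp only [hilbertSeries, PowerSeries.coeff_mk]
    omega

variable [AddSubgroupClass σR R] [GradedRing 𝓡]

theorem hilbertSeries_ofList_smul_top [∀ n, FiniteDimensional K (ℳ n)] {rs : List R}
    (hrs : ∀ t ∈ rs, t ∈ 𝓡 1) (hreg : IsWeaklyRegular M rs) :
    hilbertSeries ℳ (Ideal.ofList rs • ⊤ : Submodule R M) =
      (.mk fun n => (Module.finrank K (ℳ n) : ℤ)) * (1 - PowerSeries.X) ^ rs.length := by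
  induction rs using List.reverseRecOn with
  | nil => rw [Ideal.ofList_nil, Submodule.bot_smul, hilbertSeries_bot, List.length_nil, pow_zero,
      mul_one]
  | append_singleton rs t ih =>
    rw [isWeaklyRegular_append_iff, isWeaklyRegular_singleton_iff] at hreg
    have hrs' : ∀ u ∈ rs, u ∈ 𝓡 1 := fun u hu => hrs u (List.mem_append_left _ hu)
    rw [Ideal.ofList_append, Ideal.ofList_singleton, Submodule.sup_smul,
      hilbertSeries_sup_span_smul_top (isHomogeneous_ideal_smul_top (isHomogeneous_ofList 𝓡 hrs'))
        (hrs t (by simp)) hreg.2,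
      ih hrs' hreg.1, mul_assoc, ← pow_succ, List.length_append, List.length_singleton]

end HilbertSeries

section ParameterSubring

open MvPolynomial RingTheory.Sequence

theorem span_range_eq_ofList_ofFn {R : Type*} [CommRing R] {d : ℕ} (f : Fin d → R) :
    Ideal.span (Set.range f) = Ideal.ofList (List.ofFn f) := by
  rw [Ideal.ofList]
  congr 1
  ext x
  exact (List.mem_ofFn' f x).symm

theorem sub_C_constantCoeff_mem_idealOfVars {K σ : Type*} [CommRing K] (p : MvPolynomial σ K) :
    p - C (constantCoeff p) ∈ idealOfVars σ K := by
  rw [← pow_one (idealOfVars σ K), mem_pow_idealOfVars_iff']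
  intro m hm
  rw [(Finsupp.degree_eq_zero_iff m).1 (Nat.lt_one_iff.1 hm), coeff_sub, coeff_zero_C]
  exact sub_self _

variable {K A : Type*} [CommRing K] [CommRing A] [Algebra K A] {𝒜 : ℕ → Submodule K A}

theorem aeval_mem_of_isHomogeneous {σ : Type*} [SetLike.GradedMonoid 𝒜] {θ : σ → A}
    (hθ : ∀ j, θ j ∈ 𝒜 1) {n : ℕ} {f : MvPolynomial σ K} (hf : f.IsHomogeneous n) :
    aeval θ f ∈ 𝒜 n := by
  rw [f.as_sum, map_sum]
  refine sum_mem fun m hm => ?_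
  have degree_eq : m.degree = n := of_not_not fun hne => mem_support_iff.1 hm (hf.coeff_eq_zero hne)
  rw [aeval_monomial, ← Algebra.smul_def, ← degree_eq, Finsupp.degree_apply]
  refine Submodule.smul_mem _ _ (SetLike.prod_mem_graded _ _ _ fun j _ => ?_)
  simpa using SetLike.pow_mem_graded (m j) (hθ j)

theorem map_aeval_varPowIdeal {σ : Type*} (θ : σ → A) (a : σ → ℕ) :
    (varPowIdeal K a).map (aeval (R := K) θ) = Ideal.span (Set.range fun j => θ j ^ (a j + 1)) := by
  rw [varPowIdeal, Ideal.map_span, ← Set.range_comp]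
  congr! with j
  simp

variable {d : ℕ} {θ : Fin d → A}

theorem veroneseLsopIdealComponent_le (r i : ℕ) :
    veroneseLsopIdealComponent K 𝒜 θ r i ≤
      (Ideal.span (Set.range fun j => θ j ^ r)).restrictScalars K := by
  cases i with
  | zero => exact bot_le
  | succ i =>
    refine iSup_le fun j => ?_
    rintro _ ⟨a, -, rfl⟩
    exact Ideal.mul_mem_right _ _ (Ideal.subset_span ⟨j, rfl⟩)

theorem mem_veroneseLsopIdealComponent_iff [GradedAlgebra 𝒜] (hθ : ∀ j, θ j ∈ 𝒜 1) {r : ℕ}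
    (hr : 0 < r) {i : ℕ} {x : A} (hx : x ∈ 𝒜 (i * r)) :
    x ∈ veroneseLsopIdealComponent K 𝒜 θ r i ↔
      x ∈ Ideal.span (Set.range fun j => θ j ^ r) := by
  refine ⟨fun h => veroneseLsopIdealComponent_le (K := K) (𝒜 := 𝒜) r i h, fun h => ?_⟩
  have hθr (j : Fin d) : θ j ^ r ∈ 𝒜 r := by simpa using SetLike.pow_mem_graded r (hθ j)
  obtain ⟨c, rfl⟩ := Ideal.mem_span_range_iff_exists_fun.1 h
  rw [← DirectSum.decompose_of_mem_same 𝒜 hx, DirectSum.decompose_sum, DFinsupp.finsetSum_apply,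
    AddSubmonoidClass.coe_finsetSum]
  refine sum_mem fun j _ => ?_
  cases i with
  | zero =>
    rw [DirectSum.coe_decompose_mul_of_right_mem_of_not_le 𝒜 (hθr j) (by omega)]
    exact zero_mem _
  | succ i =>
    have hi : (i + 1) * r - r = i * r := by rw [add_one_mul, Nat.add_sub_cancel]
    rw [DirectSum.coe_decompose_mul_of_right_mem_of_le 𝒜 (hθr j)
      (Nat.le_mul_of_pos_left r i.succ_pos), hi, mul_comm]
    exact Submodule.mem_iSup_of_mem j
      ⟨_, SetLike.coe_mem (DirectSum.decompose 𝒜 (c j) (i * r)), rfl⟩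

end ParameterSubring

section LinearParameters

open MvPolynomial RingTheory.Sequence

attribute [local instance] MvPolynomial.gradedAlgebra

theorem exists_homogeneous_basis_degree_le {K : Type*} {M : Type u} [Field K] [AddCommGroup M]
    {d : ℕ} [Module K M] [Module (MvPolynomial (Fin d) K) M]
    [IsScalarTower K (MvPolynomial (Fin d) K) M] {ℳ : ℕ → Submodule K M} [DirectSum.Decomposition ℳ]
    [SetLike.GradedSMul (homogeneousSubmodule (Fin d) K) ℳ]
    (hreg : IsWeaklyRegular M (List.ofFn (X : Fin d → MvPolynomial (Fin d) K))) {s : ℕ}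
    (hs : ∀ n, s < n → ∀ x ∈ ℳ n,
      x ∈ (idealOfVars (Fin d) K • ⊤ : Submodule (MvPolynomial (Fin d) K) M)) :
    ∃ (ι : Type u) (δ : ι → ℕ) (b : Module.Basis ι (MvPolynomial (Fin d) K) M),
      (∀ k, b k ∈ ℳ (δ k)) ∧ ∀ k, δ k ≤ s := by
  have vars_mem : ∀ t ∈ List.ofFn (X : Fin d → MvPolynomial (Fin d) K),
      t ∈ homogeneousSubmodule (Fin d) K 1 :=
    List.forall_mem_ofFn_iff.2 (isHomogeneous_X K)
  have idealOfVars_eq := span_range_eq_ofList_ofFn (X : Fin d → MvPolynomial (Fin d) K)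
  obtain ⟨ι, δ, b, hb⟩ := exists_homogeneous_basis ℳ (homogeneousSubmodule (Fin d) K) vars_mem
    (fun p => ⟨constantCoeff p, idealOfVars_eq ▸ sub_C_constantCoeff_mem_idealOfVars p⟩) hreg
  rw [← idealOfVars_eq] at hb
  exact ⟨ι, δ, b, fun j => (hb j).1, fun j => not_lt.1 fun hj => (hb j).2 (hs _ hj _ (hb j).1)⟩

variable {K A : Type*} [Field K] [CommRing A] [Algebra K A] {𝒜 : ℕ → Submodule K A}
  [GradedAlgebra 𝒜] {d : ℕ} {θ : Fin d → A}

theorem lefschetz_mod_span_range_pow [CharZero K] (hθ : ∀ j, θ j ∈ 𝒜 1)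
    (hreg : IsWeaklyRegular A (List.ofFn θ)) {s : ℕ}
    (hs : ∀ n, s < n → 𝒜 n ≤ (Ideal.span (Set.range θ)).restrictScalars K)
    (a : Fin d → ℕ) (n k : ℕ) :
    (2 * n + k ≤ ∑ j, a j → ∀ x ∈ 𝒜 n,
      (∑ j, θ j) ^ k * x ∈ Ideal.span (Set.range fun j => θ j ^ (a j + 1)) →
        x ∈ Ideal.span (Set.range fun j => θ j ^ (a j + 1))) ∧
    (∑ j, a j + 2 * s ≤ 2 * n + k → ∀ y ∈ 𝒜 (n + k), ∃ x ∈ 𝒜 n,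
      y - (∑ j, θ j) ^ k * x ∈ Ideal.span (Set.range fun j => θ j ^ (a j + 1))) := by
  let : Algebra (MvPolynomial (Fin d) K) A := (aeval θ).toAlgebra
  have algebraMap_eq : algebraMap (MvPolynomial (Fin d) K) A = aeval (R := K) θ := rfl
  have : IsScalarTower K (MvPolynomial (Fin d) K) A :=
    .of_algebraMap_eq fun c => ((aeval (R := K) θ).commutes c).symm
  have : SetLike.GradedSMul (homogeneousSubmodule (Fin d) K) 𝒜 :=
    ⟨fun _ _ _ _ hf hx => SetLike.mul_mem_graded (aeval_mem_of_isHomogeneous hθ hf) hx⟩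
  have smul_top_eq : (varPowIdeal K a • ⊤ : Submodule (MvPolynomial (Fin d) K) A) =
      (Ideal.span (Set.range fun j => θ j ^ (a j + 1))).restrictScalars
        (MvPolynomial (Fin d) K) := by
    rw [Ideal.smul_top_eq_map, algebraMap_eq, ← map_aeval_varPowIdeal (K := K)]
    rfl
  have hregX : IsWeaklyRegular A (List.ofFn (X : Fin d → MvPolynomial (Fin d) K)) := by
    rw [← isWeaklyRegular_map_algebraMap_iff A (M := A), List.map_ofFn]
    simpa [Function.comp_def, algebraMap_eq] using hreg
  have hsX (n : ℕ) (hn : s < n) (x : A) (hx : x ∈ 𝒜 n) :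
      x ∈ (idealOfVars (Fin d) K • ⊤ : Submodule (MvPolynomial (Fin d) K) A) := by
    rw [Ideal.smul_top_eq_map, idealOfVars, Ideal.map_span, ← Set.range_comp]
    simpa [Function.comp_def, algebraMap_eq] using hs n hn hx
  have sum_X_pow_smul (x : A) :
      (∑ j, X j : MvPolynomial (Fin d) K) ^ k • x = (∑ j, θ j) ^ k * x := by
    simp [Algebra.smul_def, algebraMap_eq]
  obtain ⟨ι, δ, b, hb, hδ⟩ := exists_homogeneous_basis_degree_le hregX hsX
  constructor
  · intro hk x hx
    have := mem_varPowIdeal_smul_top_of_sum_X_pow_smul_mem hb hk hx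
    rwa [smul_top_eq, sum_X_pow_smul] at this
  · intro hk y hy
    have := exists_sub_sum_X_pow_smul_mem_varPowIdeal_smul_top hb hδ hk hy
    simpa only [smul_top_eq, sum_X_pow_smul, Submodule.restrictScalars_mem] using this

theorem le_span_range_of_coeff_eq_zero [∀ n, FiniteDimensional K (𝒜 n)] (hθ : ∀ j, θ j ∈ 𝒜 1)
    (hreg : IsWeaklyRegular A (List.ofFn θ)) {n : ℕ}
    (hn : PowerSeries.coeff n
      ((PowerSeries.mk fun i => (Module.finrank K (𝒜 i) : ℤ)) * (1 - PowerSeries.X) ^ d) = 0) :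
    𝒜 n ≤ (Ideal.span (Set.range θ)).restrictScalars K := by
  have series_eq := hilbertSeries_ofList_smul_top (ℳ := 𝒜) (List.forall_mem_ofFn_iff.2 hθ) hreg
  rw [List.length_ofFn] at series_eq
  have := le_of_coeff_hilbertSeries_eq_zero (series_eq ▸ hn)
  rwa [← span_range_eq_ofList_ofFn, smul_eq_mul, Ideal.mul_top] at this

end LinearParameters

end VeroneseLefschetz

open VeroneseLefschetz RingTheory.Sequence in
theorem veronese_weak_Lefschetz_odd_general {K A : Type*} [Field K] [CharZero K] [CommRing A]
    [Algebra K A] {𝒜 : ℕ → Submodule K A} [GradedAlgebra 𝒜] {d : ℕ} (hdodd : Odd d) {θ : Fin d → A}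
    (hθ : ∀ j, θ j ∈ 𝒜 1) (hreg : IsWeaklyRegular A (List.ofFn θ)) {s : ℕ}
    (hs : ∀ n, s < n → 𝒜 n ≤ (Ideal.span (Set.range θ)).restrictScalars K) (hsd : 2 * s ≤ d)
    {r : ℕ} (hrd : d ≤ 2 * r) :
    ∃ w ∈ 𝒜 r, ∀ i : ℕ,
      (∀ x ∈ 𝒜 (i * r),
        w * x ∈ veroneseLsopIdealComponent K 𝒜 θ r (i + 1) →
          x ∈ veroneseLsopIdealComponent K 𝒜 θ r i) ∨
      (∀ y ∈ 𝒜 ((i + 1) * r), ∃ x ∈ 𝒜 (i * r),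
        y - w * x ∈ veroneseLsopIdealComponent K 𝒜 θ r (i + 1)) := by
  obtain ⟨t, rfl⟩ : ∃ t, r = t + 1 := Nat.exists_eq_succ_of_ne_zero (by grind)
  have hw : (∑ j, θ j) ^ (t + 1) ∈ 𝒜 (t + 1) := by
    simpa using SetLike.pow_mem_graded (t + 1) (sum_mem fun j _ => hθ j)
  have mul_mem {i : ℕ} {x : A} (hx : x ∈ 𝒜 (i * (t + 1))) :
      (∑ j, θ j) ^ (t + 1) * x ∈ 𝒜 ((i + 1) * (t + 1)) := by
    simpa only [add_one_mul, add_comm] using SetLike.mul_mem_graded hw hx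
  refine ⟨(∑ j, θ j) ^ (t + 1), hw, fun i => ?_⟩
  obtain ⟨injective, surjective⟩ :=
    lefschetz_mod_span_range_pow hθ hreg hs (fun _ => t) (i * (t + 1)) (t + 1)
  rw [Fin.sum_const, smul_eq_mul] at injective surjective
  rcases le_or_gt d (2 * i + 1) with hi | hi
  · refine .inr fun y hy => ?_
    obtain ⟨x, hx, hxy⟩ := surjective (by nlinarith) y (by rwa [← add_one_mul])
    exact ⟨x, hx, (mem_veroneseLsopIdealComponent_iff hθ t.succ_pos
      (sub_mem hy (mul_mem hx))).2 hxy⟩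
  · have hi' : 2 * i + 3 ≤ d := by grind
    refine .inl fun x hx hwx => (mem_veroneseLsopIdealComponent_iff hθ t.succ_pos hx).2 ?_
    exact injective (by nlinarith) x hx (veroneseLsopIdealComponent_le (𝒜 := 𝒜) _ _ hwx)

/-- **Theorem 1.2(iii), Kubitzke–Murai.**
Let `A` be a Cohen-Macaulay standard graded `K`-algebra of odd Krull dimension `d` over a
field of characteristic `0`, `Θ = θ₁,…,θ_d` an l.s.o.p. for `A`.  If `r ≥ d/2` and
`deg h_A(t) ≤ d/2` (i.e. `d ≤ 2r` and `2 deg h_A(t) ≤ d`), then `A_Θ^⟨r⟩` (whose degree-`i`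
component is `𝒜 (i*r) ⧸ veroneseLsopIdealComponent K 𝒜 θ r i`) has the weak Lefschetz
property: there is a linear form `w` (represented by an element of `𝒜 r = (A^⟨r⟩)_1`) such
that multiplication by `w` from the degree-`i` to the degree-`(i+1)` component is injective
or surjective for every `i ≥ 0`. -/
theorem veronese_weak_Lefschetz_odd
    (K : Type*) [Field K] [CharZero K]
    (A : Type*) [CommRing A] [Algebra K A]
    (𝒜 : ℕ → Submodule K A) [GradedAlgebra 𝒜]
    (hstd : ∀ i, 𝒜 i = 𝒜 1 ^ i)
    (hfin : ∀ i, Module.Finite K (𝒜 i))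
    (d : ℕ) (hdodd : Odd d) (hdim : ringKrullDim A = d)
    (hCM : ∀ θ' : Fin d → A, (∀ j, θ' j ∈ 𝒜 1) →
      Module.Finite K (A ⧸ Ideal.span (Set.range θ')) →
      RingTheory.Sequence.IsRegular A (List.ofFn θ'))
    (θ : Fin d → A) (hθ1 : ∀ j, θ j ∈ 𝒜 1)
    (hθlsop : Module.Finite K (A ⧸ Ideal.span (Set.range θ)))
    (h : Polynomial ℤ)
    (hh : (h : PowerSeries ℤ) =
      (PowerSeries.mk fun i => (Module.finrank K (𝒜 i) : ℤ)) * (1 - PowerSeries.X) ^ d)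
    (r : ℕ) (hr : 1 ≤ r) (hrbound : d ≤ 2 * r) (hdegbound : 2 * h.natDegree ≤ d) :
    ∃ w ∈ 𝒜 r, ∀ i : ℕ,
      (∀ x ∈ 𝒜 (i * r),
        w * x ∈ veroneseLsopIdealComponent K 𝒜 θ r (i + 1) →
          x ∈ veroneseLsopIdealComponent K 𝒜 θ r i) ∨
      (∀ y ∈ 𝒜 ((i + 1) * r), ∃ x ∈ 𝒜 (i * r),
        y - w * x ∈ veroneseLsopIdealComponent K 𝒜 θ r (i + 1)) := by
  have hregΘ := (hCM θ hθ1 hθlsop).toIsWeaklyRegular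
  refine veronese_weak_Lefschetz_odd_general hdodd hθ1 hregΘ (fun n hn => ?_) hdegbound hrbound
  refine VeroneseLefschetz.le_span_range_of_coeff_eq_zero hθ1 hregΘ ?_
  rw [← hh, Polynomial.coeff_coe, Polynomial.coeff_eq_zero_of_natDegree_lt hn]
end

section
/- Let K be a field of characteristic 0 and let A be a Cohen-Macaulay standard graded K-algebra with h-polynomial h_A(t). If r ≥ (deg h_A(t) + 1)/2, then the h-polynomial h_{A^⟨r⟩}(t) of the r-th Veronese subalgebra A^⟨r⟩ is the f-polynomial of a flag simplicial complex. -/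
/-!
For a linear system of parameters `θ`, regular because `A` is Cohen-Macaulay, the algebra `A / (θ)`
has Hilbert series `h_A`, so `h_A` has the coefficients `H k = dim (A / (θ))_k`. The coefficient of
`t ^ i` in `h_{A^⟨r⟩}` is that of `t ^ (i * r)` in `h_A * (1 + t + ⋯ + t ^ (r - 1)) ^ d`. It counts
the paths with `d` steps in `{0, …, r - 1}` that end at height `i * r`, where a path starting at
height `k` carries one of `H k` labels. Cutting such a path at the multiples of `r` turns it into a
chain with `i` elements in the partially ordered set of the paths that end at height `r`. The labels
can be cut as well, because `H (r + k) ≤ H r * H k` and `H` vanishes from `2 * r` on. Hence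
`h_{A^⟨r⟩}` is the `f`-polynomial of an order complex, and order complexes are flag.
-/

/-- The number of chains with `i` elements in a partially ordered set. -/
noncomputable def chainCount (α : Type*) [PartialOrder α] (i : ℕ) : ℕ :=
  {s : Finset α | IsChain (· ≤ ·) (s : Set α) ∧ s.card = i}.ncard

theorem chainCount_eq_card_orderEmbedding (α : Type*) [PartialOrder α] (i : ℕ) :
    chainCount α i = Nat.card (Fin i ↪o α) := by
  classical
  rw [chainCount, ← Nat.card_coe_set_eq]
  refine (Nat.card_eq_of_bijective
    (fun f : Fin i ↪o α => (⟨Finset.univ.map f.toEmbedding, ?_, ?_⟩ :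
      {s : Finset α | IsChain (· ≤ ·) (s : Set α) ∧ s.card = i})) ⟨?_, ?_⟩).symm
  · simpa using f.monotone.isChain_range
  · simp
  · intro f g hfg
    have hrange : Set.range f = Set.range g := by
      simpa using congrArg (fun s : Finset α => (s : Set α)) (congrArg Subtype.val hfg)
    exact DFunLike.coe_injective ((f.strictMono.range_inj g.strictMono).1 hrange)
  · rintro ⟨s, hchain, hcard⟩
    let _ : LinearOrder s := hchain.linearOrder
    let e : Fin i ≃o s := Fintype.orderIsoFinOfCardEq s (by simpa using hcard)
    refine ⟨e.toOrderEmbedding.trans (OrderEmbedding.subtype (· ∈ s)), Subtype.ext ?_⟩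
    rw [← Finset.coe_inj]
    simp only [Finset.coe_map, Finset.coe_univ, Set.image_univ]
    exact (e.surjective.range_comp Subtype.val).trans Subtype.range_coe

theorem exists_flag_complex_card_filter_eq_chainCount (α : Type*) [PartialOrder α] [Finite α] :
    ∃ (n : ℕ) (Δ : Finset (Finset (Fin n))),
      ∅ ∈ Δ ∧
      (∀ F ∈ Δ, ∀ G ⊆ F, G ∈ Δ) ∧
      (∀ F : Finset (Fin n), F ∉ Δ → (∀ G, G ⊂ F → G ∈ Δ) → F.card ≤ 2) ∧
      (∀ i : ℕ, (Δ.filter fun F => F.card = i).card = chainCount α i) := by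
  classical
  let e := Finite.equivFin α
  let Δ : Finset (Finset (Fin (Nat.card α))) :=
    {F | IsChain (· ≤ ·) (F.map e.symm.toEmbedding : Set α)}
  have mem_Δ (F) : F ∈ Δ ↔ IsChain (· ≤ ·) (F.map e.symm.toEmbedding : Set α) := by simp [Δ]
  refine ⟨Nat.card α, Δ, by simp [mem_Δ], ?_, ?_, ?_⟩
  · intro F hF G hGF
    rw [mem_Δ] at hF ⊢
    exact hF.mono (by exact_mod_cast Finset.map_subset_map.2 hGF)
  · intro F hF hproper
    obtain ⟨u, hu, v, hv, huv⟩ : ∃ u ∈ F, ∃ v ∈ F, ¬IsChain (· ≤ ·) {e.symm u, e.symm v} := by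
      by_contra! hpairs
      refine hF ((mem_Δ F).2 fun a ha b hb hab => ?_)
      obtain ⟨u, hu, rfl⟩ := Finset.mem_map.1 ha
      obtain ⟨v, hv, rfl⟩ := Finset.mem_map.1 hb
      exact hpairs u hu v hv (by simp) (by simp) hab
    obtain rfl | hss := (show {u, v} ⊆ F by simp [Finset.insert_subset_iff, hu, hv]).eq_or_ssubset
    · exact Finset.card_le_two
    · exact absurd (by simpa [Set.image_insert_eq] using (mem_Δ _).1 (hproper _ hss)) huv
  · intro i
    have himage : {s : Finset α | IsChain (· ≤ ·) (s : Set α) ∧ s.card = i} =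
        ↑((Δ.filter fun F => F.card = i).map (Equiv.finsetCongr e.symm).toEmbedding) := by
      ext s
      simp [mem_Δ]
    rw [chainCount, himage, Set.ncard_coe_finset, Finset.card_map]

lemma partialSum_last {M : Type*} [AddCommMonoid M] {n : ℕ} (f : Fin n → M) :
    Fin.partialSum f (Fin.last n) = ∑ i, f i := by
  rw [← List.sum_ofFn, Fin.partialSum, Fin.val_last, List.take_of_length_le (by simp)]

/-- A path of heights `height 0 ≤ ⋯ ≤ height d = N` with steps smaller than `r`, carrying a label
smaller than `H (height 0)`. If `B` is a graded algebra with Hilbert function `H`, these paths index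
a basis of the degree `N` part of `B[x₁, …, x_d] / (x₁ ^ r, …, x_d ^ r)`: the label stands for a
basis element of `B` of degree `height 0`, and the steps are the exponents of `x₁, …, x_d`. -/
@[ext]
structure LabelledPath (d r : ℕ) (H : ℕ → ℕ) (N : ℕ) where
  height : Fin (d + 1) → ℕ
  label : ℕ
  height_last : height (Fin.last d) = N
  height_le_succ (l : Fin d) : height l.castSucc ≤ height l.succ
  height_succ_lt (l : Fin d) : height l.succ < height l.castSucc + r
  label_lt : label < H (height 0)

namespace LabelledPath

variable {d r : ℕ} {H : ℕ → ℕ} {N : ℕ}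

lemma height_monotone (u : LabelledPath d r H N) : Monotone u.height :=
  Fin.monotone_iff_le_succ.2 u.height_le_succ

lemma height_le (u : LabelledPath d r H N) (x : Fin (d + 1)) : u.height x ≤ N :=
  (u.height_monotone (Fin.le_last x)).trans_eq u.height_last

lemma height_eq_add_partialSum (u : LabelledPath d r H N) (x : Fin (d + 1)) :
    u.height x =
      u.height 0 + Fin.partialSum (fun l => u.height l.succ - u.height l.castSucc) x := by
  induction x using Fin.induction with
  | zero => simp
  | succ l ih =>
    rw [Fin.partialSum_succ, ← add_assoc, ← ih, Nat.add_sub_cancel' (u.height_le_succ l)]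

lemma height_zero_add_sum_steps (u : LabelledPath d r H N) :
    u.height 0 + ∑ l : Fin d, (u.height l.succ - u.height l.castSucc) = N := by
  rw [← partialSum_last, ← u.height_eq_add_partialSum, u.height_last]

variable (d r H N) in
/-- A labelled path is determined by its label and its steps. -/
def equivSigma : LabelledPath d r H N ≃
    Σ m : Fin d → Fin r, Fin (if ∑ l, (m l : ℕ) ≤ N then H (N - ∑ l, (m l : ℕ)) else 0) where
  toFun u :=
    ⟨fun l => ⟨u.height l.succ - u.height l.castSucc, by
        have := u.height_le_succ l
        have := u.height_succ_lt l
        omega⟩,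
      u.label, by
        have hsum := u.height_zero_add_sum_steps
        rw [if_pos (by simp only; omega), ← Nat.eq_sub_of_add_eq hsum]
        exact u.label_lt⟩
  invFun p :=
    have hlabel := p.2.isLt
    have hle : ∑ l, (p.1 l : ℕ) ≤ N := by
      by_contra hlt
      simp [if_neg hlt] at hlabel
    { height x := N - ∑ l, (p.1 l : ℕ) + Fin.partialSum (fun l => (p.1 l : ℕ)) x
      label := p.2
      height_last := by rw [partialSum_last, Nat.sub_add_cancel hle]
      height_le_succ := by simp [Fin.partialSum_succ, ← add_assoc]
      height_succ_lt := by simp [Fin.partialSum_succ, ← add_assoc]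
      label_lt := by simpa [if_pos hle] using hlabel }
  left_inv u := by
    ext x
    · have hsum := u.height_zero_add_sum_steps
      simp only
      rw [← Nat.eq_sub_of_add_eq hsum, ← u.height_eq_add_partialSum x]
    · rfl
  right_inv p := by
    have hsteps (l : Fin d) :
      N - ∑ l, (p.1 l : ℕ) + Fin.partialSum (fun l => (p.1 l : ℕ)) l.succ -
        (N - ∑ l, (p.1 l : ℕ) + Fin.partialSum (fun l => (p.1 l : ℕ)) l.castSucc) = p.1 l := by
      rw [Fin.partialSum_succ, ← add_assoc, Nat.add_sub_cancel_left]
    refine Sigma.ext (funext fun l => Fin.ext (hsteps l)) ?_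
    exact (Fin.heq_ext_iff (by simp only [hsteps])).2 rfl

instance : Finite (LabelledPath d r H N) := Finite.of_equiv _ (equivSigma d r H N).symm

variable (d r H N) in
lemma card_eq_sum : Nat.card (LabelledPath d r H N) =
    ∑ m : Fin d → Fin r, if ∑ l, (m l : ℕ) ≤ N then H (N - ∑ l, (m l : ℕ)) else 0 := by
  rw [Nat.card_congr (equivSigma d r H N), Nat.card_eq_fintype_card, Fintype.card_sigma]
  simp only [Fintype.card_fin]

end LabelledPath

/-- A numerical form of the hypotheses on the Hilbert function of an Artinian reduction: labels of
height below `2 * r` can be cut at height `r`. -/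
structure IsCuttable (r : ℕ) (H : ℕ → ℕ) : Prop where
  apply_zero : H 0 = 1
  eq_zero_of_two_mul_le {j : ℕ} : 2 * r ≤ j → H j = 0
  apply_add_le (k : ℕ) : H (r + k) ≤ H r * H k

lemma IsCuttable.pos {r : ℕ} {H : ℕ → ℕ} (hH : IsCuttable r H) : 0 < r := by
  by_contra! hr
  have := hH.eq_zero_of_two_mul_le (j := 0) (by lia)
  have := hH.apply_zero
  lia

/-- The blocks into which a labelled path is cut at the multiples of `r`. -/
abbrev Block (d r : ℕ) (H : ℕ → ℕ) : Type := LabelledPath d r H r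

namespace Block

variable {d r : ℕ} {H : ℕ → ℕ}

/-- The compatibility condition for `u` and `v` to occur, in this order, among the blocks of a
labelled path. In `label_lt`, the labels of `u` and `v` are the quotient and the remainder of the
label of a path with start `r + v.height 0`, divided by `H (v.height 0)`. -/
structure Precedes (u v : Block d r H) : Prop where
  height_eq (x : Fin (d + 1)) : v.height x = 0 ∨ u.height x = r
  step_lt (l : Fin d) :
    u.height l.succ + v.height l.succ < u.height l.castSucc + v.height l.castSucc + r
  height_zero_lt : v.height 0 < r
  label_lt : u.height 0 = r → 0 < v.height 0 →
    v.label + H (v.height 0) * u.label < H (r + v.height 0)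

lemma Precedes.irrefl (u : Block d r H) : ¬u.Precedes u := by
  intro h
  have height_eq_zero (x : Fin (d + 1)) : u.height x = 0 := by
    induction x using Fin.induction with
    | zero => exact (h.height_eq 0).resolve_right h.height_zero_lt.ne
    | succ l ih =>
      have := h.height_eq l.succ
      have := h.step_lt l
      lia
  have := u.height_last
  have := height_eq_zero (Fin.last d)
  have := h.height_zero_lt
  lia

lemma Precedes.trans {u v w : Block d r H} (huv : u.Precedes v) (hvw : v.Precedes w) :
    u.Precedes w where
  height_eq x := by
    have := huv.height_eq x
    have := hvw.height_eq x
    have := u.height_le x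
    lia
  step_lt l := by
    have := huv.height_eq l.castSucc
    have := huv.height_eq l.succ
    have := hvw.height_eq l.succ
    have := hvw.step_lt l
    have := u.height_succ_lt l
    have := v.height_le l.castSucc
    have := u.height_le l.succ
    lia
  height_zero_lt := hvw.height_zero_lt
  label_lt _ hw := by
    have := (hvw.height_eq 0).resolve_left hw.ne'
    exact absurd huv.height_zero_lt this.not_lt

instance : IsStrictOrder (Block d r H) Precedes where
  irrefl := Precedes.irrefl
  trans _ _ _ := Precedes.trans

instance : PartialOrder (Block d r H) := partialOrderOfSO Precedes

lemma lt_iff_precedes {u v : Block d r H} : u < v ↔ u.Precedes v := Iff.rfl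

end Block

section Truncation

variable {r i : ℕ}

lemma sum_min_sub_mul (s r i : ℕ) : ∑ k : Fin i, min (s - k * r) r = min s (i * r) := by
  induction i with
  | zero => simp
  | succ i ih =>
    rw [Fin.sum_univ_castSucc]
    simp only [Fin.val_castSucc, Fin.val_last, ih]
    lia

lemma eq_min_sum_sub_mul {w : Fin i → ℕ} (hle : ∀ k, w k ≤ r)
    (hfill : ∀ k l, k < l → w l = 0 ∨ w k = r) (k : Fin i) :
    w k = min (∑ l, w l - k * r) r := by
  induction i with
  | zero => exact k.elim0
  | succ i ih =>
    rw [Fin.sum_univ_succ]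
    cases k using Fin.cases with
    | zero =>
      obtain h0 | h0 := (hle 0).eq_or_lt
      · simp [h0]
      · have hzero (l : Fin i) : w l.succ = 0 :=
          (hfill 0 l.succ l.succ_pos).resolve_right h0.ne
        simp [hzero, hle]
    | succ k =>
      rw [ih (w := fun l => w l.succ) (fun l => hle l.succ)
        (fun l m hlm => hfill _ _ (Fin.succ_lt_succ_iff.2 hlm)) k]
      obtain h0 | h0 := (hle 0).eq_or_lt
      · rw [h0, Fin.val_succ, add_mul]
        lia
      · have hzero (l : Fin i) : w l.succ = 0 :=
          (hfill 0 l.succ l.succ_pos).resolve_right h0.ne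
        simp only [hzero, Finset.sum_const_zero, Fin.val_succ, add_mul]
        lia

end Truncation

/-- The label of the `k`-th block of a labelled path with start `s` and label `c`. For `r ≤ s`, the
label of the path is divided by `H (s - r)`, the quotient going to block `0` and the remainder to
block `1`. -/
def sliceLabel (r : ℕ) (H : ℕ → ℕ) (s c k : ℕ) : ℕ :=
  if (k + 1) * r ≤ s then c / H (s - r) else c % H (s - k * r)

section SliceLabel

variable {r : ℕ} {H : ℕ → ℕ} {s c : ℕ}

lemma sliceLabel_zero_of_lt (hc : c < H s) (hs : s < r) : sliceLabel r H s c 0 = c := by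
  simp [sliceLabel, hs, Nat.mod_eq_of_lt hc]

lemma sliceLabel_zero_of_le (hs : r ≤ s) : sliceLabel r H s c 0 = c / H (s - r) := by
  simp [sliceLabel, hs]

namespace IsCuttable

variable (hH : IsCuttable r H)
include hH

lemma start_lt_two_mul (hc : c < H s) : s < 2 * r := by
  by_contra! hs
  simp [hH.eq_zero_of_two_mul_le hs] at hc

lemma apply_le_mul_apply_sub (hs : r ≤ s) : H s ≤ H r * H (s - r) := by
  simpa [Nat.add_sub_cancel' hs] using hH.apply_add_le (s - r)

lemma apply_sub_mul_pos (hc : c < H s) (k : ℕ) : 0 < H (s - k * r) := by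
  have hs := hH.start_lt_two_mul hc
  obtain _ | _ | k := k
  · simpa using Nat.zero_lt_of_lt hc
  · obtain hsr | hrs := le_total s r
    · simp [hsr, hH.apply_zero]
    · have := (Nat.zero_lt_of_lt hc).trans_le (hH.apply_le_mul_apply_sub hrs)
      simpa using Nat.pos_of_mul_pos_left this
  · rw [Nat.sub_eq_zero_of_le (by lia), hH.apply_zero]
    exact one_pos

lemma sliceLabel_lt (hc : c < H s) (k : ℕ) : sliceLabel r H s c k < H (min (s - k * r) r) := by
  have hs := hH.start_lt_two_mul hc
  unfold sliceLabel
  split_ifs with hk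
  · rw [min_eq_right (by lia)]
    exact Nat.div_lt_of_lt_mul (mul_comm (H r) _ ▸ hc.trans_le (hH.apply_le_mul_apply_sub (by lia)))
  · rw [min_eq_left (by lia)]
    exact Nat.mod_lt _ (hH.apply_sub_mul_pos hc k)

lemma sliceLabel_eq_zero {k : ℕ} (hk : s ≤ k * r) : sliceLabel r H s c k = 0 := by
  have := hH.pos
  rw [sliceLabel, if_neg (by lia), Nat.sub_eq_zero_of_le hk, hH.apply_zero, Nat.mod_one]

lemma sliceLabel_one (hc : c < H s) : sliceLabel r H s c 1 = c % H (s - r) := by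
  simp [sliceLabel, hH.start_lt_two_mul hc]

lemma sliceLabel_injective {c' : ℕ} (hc : c < H s) (hc' : c' < H s)
    (h : ∀ k, sliceLabel r H s c k = sliceLabel r H s c' k) : c = c' := by
  obtain hs | hs := lt_or_ge s r
  · simpa [sliceLabel_zero_of_lt, hc, hc', hs] using h 0
  · have hdiv := h 0
    have hmod := h 1
    rw [sliceLabel_zero_of_le hs, sliceLabel_zero_of_le hs] at hdiv
    rw [hH.sliceLabel_one hc, hH.sliceLabel_one hc'] at hmod
    rw [← Nat.div_add_mod c (H (s - r)), hdiv, hmod, Nat.div_add_mod]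

lemma exists_sliceLabel_eq {b : ℕ → ℕ} (hs : s < 2 * r) (hb : ∀ k, b k < H (min (s - k * r) r))
    (hb01 : r < s → b 1 + H (s - r) * b 0 < H s) :
    ∃ c < H s, ∀ k, sliceLabel r H s c k = b k := by
  have hzero (k) (hk : s ≤ k * r) : b k = 0 := by
    simpa [Nat.sub_eq_zero_of_le hk, hH.apply_zero] using hb k
  obtain hsr | hsr := lt_or_ge s r
  · have hc : b 0 < H s := by simpa [hsr.le] using hb 0
    refine ⟨b 0, hc, fun k => ?_⟩
    obtain _ | k := k
    · exact sliceLabel_zero_of_lt hc hsr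
    · rw [hH.sliceLabel_eq_zero (by lia), hzero _ (by lia)]
  · have hb1 : b 1 < H (s - r) := by simpa [min_eq_left (show s - r ≤ r by lia)] using hb 1
    have hc : b 1 + H (s - r) * b 0 < H s := by
      obtain rfl | hlt := hsr.eq_or_lt
      · simpa [hH.apply_zero, hzero 1 (by simp)] using hb 0
      · exact hb01 hlt
    refine ⟨_, hc, fun k => ?_⟩
    obtain _ | _ | k := k
    · rw [sliceLabel_zero_of_le hsr, Nat.add_mul_div_left _ _ (Nat.zero_lt_of_lt hb1),
        Nat.div_eq_of_lt hb1, zero_add]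
    · rw [zero_add, hH.sliceLabel_one hc, Nat.add_mul_mod_self_left, Nat.mod_eq_of_lt hb1]
    · rw [hH.sliceLabel_eq_zero (by lia), hzero _ (by lia)]

end IsCuttable

end SliceLabel

namespace LabelledPath

variable {d r i : ℕ} {H : ℕ → ℕ} (hH : IsCuttable r H)

/-- The `k`-th block of a labelled path: the part of the path between the heights `k * r` and
`(k + 1) * r`. -/
def slice (S : LabelledPath d r H (i * r)) (k : Fin i) : Block d r H where
  height x := min (S.height x - k * r) r
  label := sliceLabel r H (S.height 0) S.label k
  height_last := by
    have : k * r + r ≤ i * r := Nat.succ_mul k r ▸ Nat.mul_le_mul_right r k.isLt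
    rw [S.height_last]
    omega
  height_le_succ l := by
    have := S.height_le_succ l
    omega
  height_succ_lt l := by
    have := S.height_le_succ l
    have := S.height_succ_lt l
    omega
  label_lt := hH.sliceLabel_lt S.label_lt k

lemma slice_precedes (S : LabelledPath d r H (i * r)) {k l : Fin i} (hkl : k < l) :
    (S.slice hH k).Precedes (S.slice hH l) := by
  have hmul : k * r + r ≤ l * r := Nat.succ_mul k r ▸ Nat.mul_le_mul_right r hkl
  have hr := hH.pos
  have hs := hH.start_lt_two_mul S.label_lt
  constructor
  case height_eq =>
    intro x
    simp only [slice]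
    omega
  case step_lt =>
    intro m
    have := S.height_le_succ m
    have := S.height_succ_lt m
    simp only [slice]
    omega
  case height_zero_lt =>
    simp only [slice]
    omega
  case label_lt =>
    simp only [slice]
    intro hk hl
    have hl1 : (l : ℕ) = 1 := by
      have : (l : ℕ) < 2 := lt_of_mul_lt_mul_right (a := r) (by omega) r.zero_le
      omega
    have hk0 : (k : ℕ) = 0 := by omega
    have hrs : r ≤ S.height 0 := by omega
    rw [hl1, hk0, sliceLabel_zero_of_le hrs, hH.sliceLabel_one S.label_lt, one_mul,
      min_eq_left (by omega), Nat.mod_add_div, Nat.add_sub_cancel' hrs]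
    exact S.label_lt

/-- The chain of blocks of a labelled path. -/
def slices (S : LabelledPath d r H (i * r)) : Fin i ↪o Block d r H :=
  OrderEmbedding.ofStrictMono (S.slice hH) fun _ _ => S.slice_precedes hH

lemma slices_injective :
    Function.Injective (slices hH : LabelledPath d r H (i * r) → (Fin i ↪o Block d r H)) := by
  intro S T hST
  have hslice (k : Fin i) : S.slice hH k = T.slice hH k := DFunLike.congr_fun hST k
  have hheight : S.height = T.height := by
    ext x
    have hmin := Finset.sum_congr rfl fun k (_ : k ∈ Finset.univ) =>
      congrArg (fun u => u.height x) (hslice k)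
    simpa [slice, sum_min_sub_mul, S.height_le, T.height_le] using hmin
  have hT := T.label_lt
  rw [← hheight] at hT
  refine LabelledPath.ext hheight (hH.sliceLabel_injective S.label_lt hT fun k => ?_)
  by_cases hk : k < i
  · simpa [slice, hheight] using congrArg LabelledPath.label (hslice ⟨k, hk⟩)
  · have : S.height 0 ≤ k * r := (S.height_le 0).trans (Nat.mul_le_mul_right r (by lia))
    rw [hH.sliceLabel_eq_zero this, hH.sliceLabel_eq_zero this]

lemma height_eq_min_sum_sub_mul (w : Fin i ↪o Block d r H) (x : Fin (d + 1)) (k : Fin i) :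
    (w k).height x = min (∑ l, (w l).height x - k * r) r :=
  eq_min_sum_sub_mul (fun k => (w k).height_le x)
    (fun _ _ hkl => (Block.lt_iff_precedes.1 (w.strictMono hkl)).height_eq x) k

lemma sum_height_le (w : Fin i ↪o Block d r H) (x : Fin (d + 1)) :
    ∑ k, (w k).height x ≤ i * r := by
  simpa using Finset.sum_le_card_nsmul Finset.univ (fun k => (w k).height x) r
    fun k _ => (w k).height_le x

lemma sum_height_succ_lt (hr : 0 < r) (w : Fin i ↪o Block d r H) (l : Fin d) :
    ∑ k, (w k).height l.succ < ∑ k, (w k).height l.castSucc + r := by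
  by_contra! hge
  have hlower := height_eq_min_sum_sub_mul w l.castSucc
  have hupper := height_eq_min_sum_sub_mul w l.succ
  have hle := sum_height_le w l.succ
  set a := ∑ k, (w k).height l.castSucc
  set b := ∑ k, (w k).height l.succ
  set q := a / r
  have ha : q * r ≤ a ∧ a < q * r + r :=
    ⟨Nat.div_mul_le_self a r, Nat.lt_div_mul_add hr⟩
  obtain haq | haq := ha.1.eq_or_lt
  · have hq : q < i := lt_of_mul_lt_mul_right (a := r) (by omega) r.zero_le
    have := (w ⟨q, hq⟩).height_succ_lt l
    rw [hlower, hupper] at this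
    simp only at this
    omega
  · have hmul : (q + 1) * r = q * r + r := q.succ_mul r
    have hq : q + 1 < i := lt_of_mul_lt_mul_right (a := r) (by omega) r.zero_le
    have hlt : (⟨q, by omega⟩ : Fin i) < ⟨q + 1, hq⟩ := by simp
    have := (Block.lt_iff_precedes.1 (w.strictMono hlt)).step_lt l
    rw [hlower, hlower, hupper, hupper] at this
    simp only [hmul] at this
    omega

include hH in
lemma exists_slices_eq (w : Fin i ↪o Block d r H) :
    ∃ S : LabelledPath d r H (i * r), S.slices hH = w := by
  have hr := hH.pos
  have hle := sum_height_le w 0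
  have hheight := height_eq_min_sum_sub_mul w 0
  have hprec {k l : Fin i} (hkl : k < l) := Block.lt_iff_precedes.1 (w.strictMono hkl)
  set s := ∑ k, (w k).height 0
  let b (k : ℕ) : ℕ := if hk : k < i then (w ⟨k, hk⟩).label else 0
  have hb (k : ℕ) : b k < H (min (s - k * r) r) := by
    by_cases hk : k < i
    · simpa [b, hk, hheight] using (w ⟨k, hk⟩).label_lt
    · have : s ≤ k * r := hle.trans (Nat.mul_le_mul_right r (by omega))
      simp [b, hk, Nat.sub_eq_zero_of_le this, hH.apply_zero]
  have hs : s < 2 * r := by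
    by_contra! hs
    have hi : 1 < i := lt_of_mul_lt_mul_right (a := r) (by omega) r.zero_le
    have := (hprec (show (⟨0, by omega⟩ : Fin i) < ⟨1, hi⟩ by simp)).height_zero_lt
    rw [hheight, one_mul] at this
    omega
  have hb01 (hrs : r < s) : b 1 + H (s - r) * b 0 < H s := by
    have hi : 1 < i := lt_of_mul_lt_mul_right (a := r) (by omega) r.zero_le
    have := (hprec (show (⟨0, by omega⟩ : Fin i) < ⟨1, hi⟩ by simp)).label_lt
    simp only [hheight, zero_mul, one_mul, min_eq_left (show s - r ≤ r by omega)] at this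
    simpa [b, hi, Nat.zero_lt_of_lt hi, hrs, hrs.le, Nat.add_sub_cancel' hrs.le] using this
  obtain ⟨c, hc, hlabel⟩ := hH.exists_sliceLabel_eq hs hb hb01
  refine ⟨⟨fun x => ∑ k, (w k).height x, c, ?_, ?_, sum_height_succ_lt hr w, hc⟩, ?_⟩
  · simp [height_last]
  · exact fun l => Finset.sum_le_sum fun k _ => (w k).height_le_succ l
  · ext k : 1
    apply LabelledPath.ext
    · ext x
      exact (height_eq_min_sum_sub_mul w x k).symm
    · exact (hlabel k).trans (by simp [b])

include hH in
lemma card_orderEmbedding_block :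
    Nat.card (Fin i ↪o Block d r H) = Nat.card (LabelledPath d r H (i * r)) :=
  (Nat.card_eq_of_bijective (slices hH) ⟨slices_injective hH, exists_slices_eq hH⟩).symm

end LabelledPath

section VeroneseSection

open PowerSeries

variable {R : Type*}

/-- The Veronese section `∑ aᵢᵣ tⁱ` of a power series `∑ aᵢ tⁱ`; it takes the Hilbert series of a
graded algebra to the one of its `r`-th Veronese subalgebra. -/
noncomputable def veroneseSection [Semiring R] (r : ℕ) (f : R⟦X⟧) : R⟦X⟧ :=
  PowerSeries.mk fun i => coeff (i * r) f

@[simp]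
lemma coeff_veroneseSection [Semiring R] (r i : ℕ) (f : R⟦X⟧) :
    coeff i (veroneseSection r f) = coeff (i * r) f :=
  coeff_mk _ _

lemma coeff_mul_geom_sum_pow [CommSemiring R] (f : R⟦X⟧) (d r N : ℕ) :
    coeff N (f * (∑ k ∈ Finset.range r, X ^ k) ^ d) =
      ∑ m : Fin d → Fin r,
        if ∑ l, (m l : ℕ) ≤ N then coeff (N - ∑ l, (m l : ℕ)) f else 0 := by
  rw [Finset.sum_range, Fintype.sum_pow, Finset.mul_sum, map_sum]
  simp only [Finset.prod_pow_eq_pow_sum, coeff_mul_X_pow']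

variable [CommRing R] {r : ℕ}

lemma veroneseSection_mul_one_sub_X_pow (hr : 0 < r) (f : R⟦X⟧) :
    veroneseSection r (f * (1 - X ^ r)) = veroneseSection r f * (1 - X) := by
  ext i
  cases i with
  | zero =>
    have h0 := coeff_veroneseSection r 0 f
    rw [zero_mul, coeff_zero_eq_constantCoeff_apply, coeff_zero_eq_constantCoeff_apply] at h0
    simp [mul_sub, hr.ne', h0]
  | succ i => simp [mul_sub, coeff_succ_mul_X, Nat.succ_mul, coeff_mul_X_pow]

lemma veroneseSection_mul_one_sub_X_pow_pow (hr : 0 < r) (f : R⟦X⟧) (d : ℕ) :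
    veroneseSection r (f * (1 - X ^ r) ^ d) = veroneseSection r f * (1 - X) ^ d := by
  induction d with
  | zero => simp
  | succ d ih =>
    rw [pow_succ, ← mul_assoc, veroneseSection_mul_one_sub_X_pow hr, ih, pow_succ, mul_assoc]

lemma coeff_veroneseSection_mul_one_sub_X_pow (hr : 0 < r) (f : R⟦X⟧) (d i : ℕ) :
    coeff i (veroneseSection r f * (1 - X) ^ d) =
      coeff (i * r) (f * (1 - X) ^ d * (∑ k ∈ Finset.range r, X ^ k) ^ d) := by
  rw [← veroneseSection_mul_one_sub_X_pow_pow hr, coeff_veroneseSection, ← mul_neg_geom_sum,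
    mul_pow, mul_assoc]

lemma IsCuttable.coeff_veroneseSection_eq_chainCount {H : ℕ → ℕ} (hH : IsCuttable r H) {d : ℕ}
    {f : R⟦X⟧} (hf : PowerSeries.mk (fun j => (H j : R)) = f * (1 - X) ^ d) (i : ℕ) :
    coeff i (veroneseSection r f * (1 - X) ^ d) = (chainCount (Block d r H) i : R) := by
  rw [coeff_veroneseSection_mul_one_sub_X_pow hH.pos, ← hf, coeff_mul_geom_sum_pow,
    chainCount_eq_card_orderEmbedding, LabelledPath.card_orderEmbedding_block hH,
    LabelledPath.card_eq_sum]
  simp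

end VeroneseSection

section HilbertSeries

open PowerSeries

lemma finrank_map_add_finrank_inf_ker {K V W : Type*} [Field K] [AddCommGroup V] [Module K V]
    [AddCommGroup W] [Module K W] (f : V →ₗ[K] W) (U : Submodule K V) [Module.Finite K U] :
    Module.finrank K (U.map f) + Module.finrank K (U ⊓ f.ker : Submodule K V) =
      Module.finrank K U := by
  rw [← (f.domRestrict U).finrank_range_add_finrank_ker, LinearMap.range_domRestrict,
    LinearMap.ker_domRestrict, ← Submodule.finrank_map_subtype_eq, Submodule.map_comap_subtype]

lemma finrank_map_of_injective {K V W : Type*} [Field K] [AddCommGroup V] [Module K V]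
    [AddCommGroup W] [Module K W] {f : V →ₗ[K] W} (hf : Function.Injective f)
    (U : Submodule K V) : Module.finrank K (U.map f) = Module.finrank K U :=
  (U.equivMapOfInjective f hf).finrank_eq.symm

lemma finrank_mul_le {K B : Type*} [Field K] [CommRing B] [Algebra K B] (M N : Submodule K B)
    [Module.Finite K M] [Module.Finite K N] :
    Module.finrank K (M * N : Submodule K B) ≤ Module.finrank K M * Module.finrank K N := by
  rw [← Submodule.mulMap_range, ← Module.finrank_tensorProduct]
  exact LinearMap.finrank_range_le _

variable {K A : Type*} [Field K] [CommRing A] [Algebra K A]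

/-- The Hilbert series `∑ dim_K 𝒜ᵢ tⁱ` of a family of subspaces, in practice a grading. -/
noncomputable def hilbertSeries (𝒜 : ℕ → Submodule K A) : ℤ⟦X⟧ :=
  PowerSeries.mk fun i => (Module.finrank K (𝒜 i) : ℤ)

/-- The grading which `A ⧸ I` inherits from a grading of `A` when `I` is homogeneous. -/
def quotientGrading (𝒜 : ℕ → Submodule K A) (I : Ideal A) (i : ℕ) : Submodule K (A ⧸ I) :=
  (𝒜 i).map (Ideal.Quotient.mkₐ K I).toLinearMap

variable (𝒜 : ℕ → Submodule K A)

instance [∀ i, Module.Finite K (𝒜 i)] (I : Ideal A) (i : ℕ) :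
    Module.Finite K (quotientGrading 𝒜 I i) :=
  Module.Finite.map _ _

lemma map_factor_quotientGrading {I J : Ideal A} (hIJ : I ≤ J) (i : ℕ) :
    (quotientGrading 𝒜 I i).map (Ideal.Quotient.factorₐ K hIJ).toLinearMap =
      quotientGrading 𝒜 J i := by
  rw [quotientGrading, ← Submodule.map_comp]
  rfl

lemma quotientGrading_add (hadd : ∀ i j, 𝒜 (i + j) = 𝒜 i * 𝒜 j) (I : Ideal A) (i j : ℕ) :
    quotientGrading 𝒜 I (i + j) = quotientGrading 𝒜 I i * quotientGrading 𝒜 I j := by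
  rw [quotientGrading, hadd, Submodule.map_mul]
  rfl

lemma hilbertSeries_quotientGrading_bot :
    hilbertSeries (quotientGrading 𝒜 ⊥) = hilbertSeries 𝒜 := by
  have hinj : Function.Injective (Ideal.Quotient.mkₐ K (⊥ : Ideal A)).toLinearMap :=
    (RingHom.injective_iff_ker_eq_bot (Ideal.Quotient.mk ⊥)).2 Ideal.mk_ker
  ext i
  rw [hilbertSeries, coeff_mk, quotientGrading, finrank_map_of_injective hinj, hilbertSeries,
    coeff_mk]

variable [GradedAlgebra 𝒜] {𝒜} {I : Ideal A} {e : ℕ} {θ a : A}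

lemma decompose_sub_mul_mem (hI : I.IsHomogeneous 𝒜) (hθ : θ ∈ 𝒜 e) {b : A} (h : a - θ * b ∈ I)
    {n : ℕ} (ha : a ∈ 𝒜 n) :
    if e ≤ n then a - θ * DirectSum.decompose 𝒜 b (n - e) ∈ I else a ∈ I := by
  have hn := hI n h
  rw [DirectSum.decompose_sub, DirectSum.sub_apply, Submodule.coe_sub,
    DirectSum.decompose_of_mem_same 𝒜 ha, DirectSum.coe_decompose_mul_of_left_mem 𝒜 n hθ] at hn
  split_ifs at hn ⊢ with hen
  · exact hn
  · rwa [sub_zero] at hn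

lemma quotientGrading_inf_ker_factor (hI : I.IsHomogeneous 𝒜) (hθ : θ ∈ 𝒜 e) (n : ℕ) :
    quotientGrading 𝒜 I n ⊓ (Ideal.Quotient.factorₐ K
      (le_sup_left : I ≤ I ⊔ Ideal.span {θ})).toLinearMap.ker =
      if e ≤ n then
        (quotientGrading 𝒜 I (n - e)).map (LinearMap.mulLeft K (Ideal.Quotient.mk I θ))
      else ⊥ := by
  apply le_antisymm
  · rintro x ⟨⟨a, ha, rfl⟩, hx⟩
    obtain ⟨i, hi, _, hc, rfl⟩ := Submodule.mem_sup.1 (Ideal.Quotient.eq_zero_iff_mem.1 hx)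
    obtain ⟨b, rfl⟩ := Ideal.mem_span_singleton.1 hc
    have h := decompose_sub_mul_mem hI hθ (b := b) (by simpa using hi) ha
    split_ifs at h ⊢
    · refine ⟨Ideal.Quotient.mk I _, ⟨_, (DirectSum.decompose 𝒜 b (n - e)).2, rfl⟩, ?_⟩
      exact ((map_mul _ _ _).symm.trans ((Ideal.Quotient.eq).2 h).symm)
    · exact Ideal.Quotient.eq_zero_iff_mem.2 h
  · split_ifs with hen
    · rintro _ ⟨_, ⟨a, ha, rfl⟩, rfl⟩
      refine ⟨⟨θ * a, ?_, map_mul (Ideal.Quotient.mk I) θ a⟩, Ideal.Quotient.eq_zero_iff_mem.2 ?_⟩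
      · exact Nat.add_sub_cancel' hen ▸ SetLike.mul_mem_graded hθ ha
      · exact Ideal.mul_mem_right _ _ (Ideal.mem_sup_right (Ideal.mem_span_singleton_self θ))
    · exact bot_le

variable [∀ i, Module.Finite K (𝒜 i)]

lemma hilbertSeries_quotientGrading_sup_span (hI : I.IsHomogeneous 𝒜) (hθ : θ ∈ 𝒜 e)
    (hreg : IsSMulRegular (A ⧸ I) θ) :
    hilbertSeries (quotientGrading 𝒜 (I ⊔ Ideal.span {θ})) =
      hilbertSeries (quotientGrading 𝒜 I) * (1 - X ^ e) := by
  have hinj : Function.Injective (LinearMap.mulLeft K (Ideal.Quotient.mk I θ)) := hreg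
  ext n
  have hrank := finrank_map_add_finrank_inf_ker (Ideal.Quotient.factorₐ K
    (le_sup_left : I ≤ I ⊔ Ideal.span {θ})).toLinearMap (quotientGrading 𝒜 I n)
  rw [map_factor_quotientGrading, quotientGrading_inf_ker_factor hI hθ] at hrank
  rw [mul_sub, mul_one, map_sub, coeff_mul_X_pow', eq_sub_iff_add_eq]
  simp only [hilbertSeries, coeff_mk]
  by_cases hen : e ≤ n
  · rw [if_pos hen, finrank_map_of_injective hinj] at hrank
    rw [if_pos hen]
    exact_mod_cast hrank
  · rw [if_neg hen, finrank_bot] at hrank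
    rw [if_neg hen]
    exact_mod_cast hrank

lemma hilbertSeries_quotientGrading_ofList {L : List A} (hL : ∀ θ ∈ L, θ ∈ 𝒜 e)
    (hreg : RingTheory.Sequence.IsWeaklyRegular A L) :
    hilbertSeries (quotientGrading 𝒜 (Ideal.ofList L)) =
      hilbertSeries 𝒜 * (1 - X ^ e) ^ L.length := by
  induction L using List.reverseRecOn with
  | nil =>
    rw [Ideal.ofList_nil, hilbertSeries_quotientGrading_bot, List.length_nil, pow_zero, mul_one]
  | append_singleton L θ ih =>
    rw [RingTheory.Sequence.isWeaklyRegular_append_iff,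
      RingTheory.Sequence.isWeaklyRegular_singleton_iff, smul_eq_mul, Ideal.mul_top] at hreg
    simp only [List.mem_append, List.mem_singleton, or_imp, forall_and, forall_eq] at hL
    have hI : (Ideal.ofList L).IsHomogeneous 𝒜 :=
      Ideal.homogeneous_span 𝒜 _ fun x hx => ⟨e, hL.1 x hx⟩
    rw [Ideal.ofList_append, Ideal.ofList_singleton,
      hilbertSeries_quotientGrading_sup_span hI hL.2 hreg.2, ih hL.1 hreg.1, mul_assoc,
      List.length_append, List.length_singleton, pow_succ]

end HilbertSeries

section LinearParameters

lemma exists_mem_forall_mem_imp_le {K E : Type*} [Field K] [Infinite K] [AddCommGroup E]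
    [Module K E] (V : Submodule K E) {S : Set (Submodule K E)} (hS : S.Finite) :
    ∃ x ∈ V, ∀ W ∈ S, x ∈ W → V ≤ W := by
  have : Finite {W // W ∈ S ∧ ¬V ≤ W} := (hS.subset fun _ hW => hW.1).to_subtype
  by_contra! hcover
  obtain ⟨⟨W, hWS, hVW⟩, htop⟩ := Subspace.exists_eq_top_of_iUnion_eq_univ
    (p := fun W : {W // W ∈ S ∧ ¬V ≤ W} => W.1.comap V.subtype)
    (Set.eq_univ_of_forall fun x => by
      obtain ⟨W, hW, hxW, hVW⟩ := hcover x x.2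
      exact Set.mem_iUnion.2 ⟨⟨W, hW, hVW⟩, hxW⟩)
  exact hVW (Submodule.comap_subtype_eq_top.1 htop)

lemma ringKrullDim_quotient_le_of_ringKrullDim_quotient_le_succ {R : Type*} [CommRing R]
    {I J : Ideal R} {d : ℕ} (hIJ : I ≤ J) (hmax : ∀ q ∈ I.minimalPrimes, J ≤ q → q.IsMaximal)
    (hdim : ringKrullDim (R ⧸ I) ≤ (d + 1 : ℕ)) : ringKrullDim (R ⧸ J) ≤ d := by
  rw [ringKrullDim_quotient] at hdim ⊢
  refine iSup_le fun l => ?_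
  obtain ⟨q, hq, hle⟩ := Ideal.exists_minimalPrimes_le (J := l.head.1.asIdeal)
    (hIJ.trans l.head.2)
  let q' : PrimeSpectrum.zeroLocus (I : Set R) := ⟨⟨q, hq.1.1⟩, hq.1.2⟩
  let l' : LTSeries (PrimeSpectrum.zeroLocus (I : Set R)) :=
    l.map (fun p => ⟨p.1, hIJ.trans p.2⟩) fun _ _ hlt => hlt
  obtain heq | hlt := (show q' ≤ l'.head from hle).eq_or_lt
  · have hq' : q = l.head.1.asIdeal := congrArg (fun p => p.1.asIdeal) heq
    have hhead : l.head.1.asIdeal.IsMaximal := hq' ▸ hmax q hq (hq' ▸ l.head.2)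
    have hlength : l.length = 0 := RelSeries.length_eq_zero.2 <|
      Set.subsingleton_of_forall_eq l.head <| by
        rintro _ ⟨k, rfl⟩
        have hle : l.head ≤ l k := LTSeries.head_le l k
        exact (Subtype.ext (PrimeSpectrum.ext (hhead.eq_of_le (l k).1.2.ne_top hle))).symm
    simp [hlength]
  · have hlength := (Order.LTSeries.length_le_krullDim (l'.cons q' hlt)).trans hdim
    rw [RelSeries.cons_length] at hlength
    exact_mod_cast Nat.le_of_add_le_add_right (by exact_mod_cast hlength)

variable {K A : Type*} [Field K] [CommRing A] [Algebra K A] {V : Submodule K A}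

lemma isMaximal_of_le_of_adjoin_eq_top (hgen : Algebra.adjoin K (V : Set A) = ⊤) {q : Ideal A}
    [q.IsPrime] (hVq : V ≤ q.restrictScalars K) : q.IsMaximal := by
  have hbot : (⊤ : Subalgebra K (A ⧸ q)) = ⊥ := by
    rw [← AlgHom.range_eq_top (Ideal.Quotient.mkₐ K q) |>.2 (Ideal.Quotient.mkₐ_surjective K q),
      ← Algebra.map_top, ← hgen, AlgHom.map_adjoin, eq_bot_iff, Algebra.adjoin_le_iff]
    rintro _ ⟨v, hv, rfl⟩
    rw [Ideal.Quotient.mkₐ_eq_mk, Ideal.Quotient.eq_zero_iff_mem.2 (hVq hv)]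
    exact zero_mem _
  let e : K ≃+* A ⧸ q := RingEquiv.ofBijective (algebraMap K (A ⧸ q))
    ⟨(algebraMap K (A ⧸ q)).injective, Algebra.surjective_algebraMap_iff.2 hbot⟩
  exact Ideal.Quotient.maximal_of_isField q (e.symm.toMulEquiv.isField (Field.toIsField K))

lemma exists_mem_ringKrullDim_quotient_sup_span_le [Infinite K] [IsNoetherianRing A]
    (hgen : Algebra.adjoin K (V : Set A) = ⊤) {d : ℕ} {I : Ideal A}
    (hdim : ringKrullDim (A ⧸ I) ≤ (d + 1 : ℕ)) :
    ∃ θ ∈ V, ringKrullDim (A ⧸ (I ⊔ Ideal.span {θ})) ≤ d := by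
  obtain ⟨θ, hθV, hθ⟩ := exists_mem_forall_mem_imp_le V
    ((I.finite_minimalPrimes_of_isNoetherianRing A).image (Submodule.restrictScalars K))
  refine ⟨θ, hθV, ringKrullDim_quotient_le_of_ringKrullDim_quotient_le_succ le_sup_left
    (fun q hq hle => ?_) hdim⟩
  have := hq.1.1
  exact isMaximal_of_le_of_adjoin_eq_top hgen
    (hθ _ ⟨q, hq, rfl⟩ (hle (Ideal.mem_sup_right (Ideal.mem_span_singleton_self θ))))

theorem exists_linear_parameters [Infinite K] [Algebra.FiniteType K A]
    (hgen : Algebra.adjoin K (V : Set A) = ⊤) {d : ℕ} {I : Ideal A}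
    (hdim : ringKrullDim (A ⧸ I) ≤ d) :
    ∃ θ : Fin d → A, (∀ j, θ j ∈ V) ∧ Module.Finite K (A ⧸ (I ⊔ Ideal.span (Set.range θ))) := by
  have := Algebra.FiniteType.isNoetherianRing K A
  induction d generalizing I with
  | zero =>
    refine ⟨Fin.elim0, fun j => j.elim0, ?_⟩
    rw [Set.range_eq_empty, Ideal.span_empty, sup_bot_eq, Module.finite_iff_krullDimLE_zero]
    exact Ring.krullDimLE_iff.2 hdim
  | succ d ih =>
    obtain ⟨θ₀, hθ₀, hdim₀⟩ := exists_mem_ringKrullDim_quotient_sup_span_le hgen hdim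
    obtain ⟨θ, hθ, hfin⟩ := ih hdim₀
    refine ⟨Fin.cons θ₀ θ, Fin.cases hθ₀ hθ, ?_⟩
    rwa [Fin.range_cons, Ideal.span_insert, ← sup_assoc]

end LinearParameters

section StandardGraded

open PowerSeries
open scoped Pointwise

variable {K A : Type*} [Field K] [CommRing A] [Algebra K A] {𝒜 : ℕ → Submodule K A}

lemma adjoin_eq_top_of_forall_eq_pow [GradedAlgebra 𝒜] (hstd : ∀ i, 𝒜 i = 𝒜 1 ^ i) :
    Algebra.adjoin K (𝒜 1 : Set A) = ⊤ := by
  rw [← Algebra.toSubmodule_eq_top, eq_top_iff,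
    ← (DirectSum.Decomposition.isInternal 𝒜).submodule_iSup_eq_top]
  refine iSup_le fun i => ?_
  have hspan : 𝒜 i = Submodule.span K ((𝒜 1 : Set A) ^ i) := by
    rw [hstd i, ← Submodule.span_pow, Submodule.span_eq]
  rw [hspan, Submodule.span_le]
  exact Submonoid.pow_subset (S := (Algebra.adjoin K (𝒜 1 : Set A)).toSubmonoid)
    Algebra.subset_adjoin

lemma finiteType_of_adjoin_eq_top {V : Submodule K A} [Module.Finite K V]
    (hV : Algebra.adjoin K (V : Set A) = ⊤) : Algebra.FiniteType K A := by
  obtain ⟨s, hs⟩ := Module.Finite.iff_fg.1 ‹Module.Finite K V›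
  exact ⟨s, by rw [← Algebra.adjoin_span, hs, hV]⟩

lemma isCuttable_of_coe_eq_hilbertSeries [Nontrivial A] [∀ i, Module.Finite K (𝒜 i)]
    (hstd : ∀ i, 𝒜 i = 𝒜 1 ^ i) {d : ℕ} {h : Polynomial ℤ}
    (hh : (h : ℤ⟦X⟧) = hilbertSeries 𝒜 * (1 - X) ^ d) {I : Ideal A}
    (hI : (h : ℤ⟦X⟧) = hilbertSeries (quotientGrading 𝒜 I)) {r : ℕ}
    (hdeg : h.natDegree < 2 * r) :
    IsCuttable r fun i => Module.finrank K (quotientGrading 𝒜 I i) := by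
  have hcoeff (i : ℕ) : h.coeff i = Module.finrank K (quotientGrading 𝒜 I i) := by
    rw [← Polynomial.coeff_coe, hI, hilbertSeries, coeff_mk]
  constructor
  case apply_zero =>
    have hfinrank : Module.finrank K (𝒜 0) = 1 := by
      rw [hstd 0, pow_zero, Submodule.one_eq_span]
      exact finrank_span_singleton one_ne_zero
    have h0 := congrArg constantCoeff (hI.symm.trans hh)
    simpa [hilbertSeries, hfinrank] using h0
  case eq_zero_of_two_mul_le =>
    intro j hj
    exact_mod_cast (hcoeff j).symm.trans
      (Polynomial.coeff_eq_zero_of_natDegree_lt (hdeg.trans_le hj))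
  case apply_add_le =>
    intro k
    rw [quotientGrading_add 𝒜 (fun i j => by rw [hstd, pow_add, ← hstd, ← hstd])]
    exact finrank_mul_le _ _

theorem coeff_eq_chainCount_of_isWeaklyRegular [Nontrivial A] [GradedAlgebra 𝒜]
    [∀ i, Module.Finite K (𝒜 i)] (hstd : ∀ i, 𝒜 i = 𝒜 1 ^ i) {d : ℕ} {θ : Fin d → A}
    (hθ : ∀ j, θ j ∈ 𝒜 1) (hreg : RingTheory.Sequence.IsWeaklyRegular A (List.ofFn θ))
    {h : Polynomial ℤ} (hh : (h : ℤ⟦X⟧) = hilbertSeries 𝒜 * (1 - X) ^ d) {r : ℕ}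
    (hdeg : h.natDegree < 2 * r) {hrpoly : Polynomial ℤ}
    (hhr : (hrpoly : ℤ⟦X⟧) = veroneseSection r (hilbertSeries 𝒜) * (1 - X) ^ d) (i : ℕ) :
    hrpoly.coeff i = chainCount (Block d r fun j =>
      Module.finrank K (quotientGrading 𝒜 (Ideal.ofList (List.ofFn θ)) j)) i := by
  have hquot : hilbertSeries (quotientGrading 𝒜 (Ideal.ofList (List.ofFn θ))) =
      hilbertSeries 𝒜 * (1 - X) ^ d := by
    have hmem : ∀ x ∈ List.ofFn θ, x ∈ 𝒜 1 := by simpa [List.mem_ofFn] using hθ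
    simpa using hilbertSeries_quotientGrading_ofList hmem hreg
  rw [← Polynomial.coeff_coe, hhr]
  exact_mod_cast (isCuttable_of_coe_eq_hilbertSeries hstd hh (hh.trans hquot.symm)
    hdeg).coeff_veroneseSection_eq_chainCount hquot i

end StandardGraded

theorem veronese_h_polynomial_flag_general
    (K : Type*) [Field K] [Infinite K]
    (A : Type*) [CommRing A] [Algebra K A]
    (𝒜 : ℕ → Submodule K A) [GradedAlgebra 𝒜]
    (hstd : ∀ i, 𝒜 i = 𝒜 1 ^ i)
    (hfin : ∀ i, Module.Finite K (𝒜 i))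
    (d : ℕ) (hdim : ringKrullDim A = d)
    (hCM : ∀ θ' : Fin d → A, (∀ j, θ' j ∈ 𝒜 1) →
      Module.Finite K (A ⧸ Ideal.span (Set.range θ')) →
      RingTheory.Sequence.IsRegular A (List.ofFn θ'))
    (h : Polynomial ℤ)
    (hh : (h : PowerSeries ℤ) =
      (PowerSeries.mk fun i => (Module.finrank K (𝒜 i) : ℤ)) * (1 - PowerSeries.X) ^ d)
    (r : ℕ) (hrbound : h.natDegree + 1 ≤ 2 * r)
    (hrpoly : Polynomial ℤ)
    (hhr : (hrpoly : PowerSeries ℤ) =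
      (PowerSeries.mk fun i => (Module.finrank K (𝒜 (i * r)) : ℤ)) * (1 - PowerSeries.X) ^ d) :
    ∃ (n : ℕ) (Δ : Finset (Finset (Fin n))),
      ∅ ∈ Δ ∧
      (∀ F ∈ Δ, ∀ G ⊆ F, G ∈ Δ) ∧
      (∀ F : Finset (Fin n), F ∉ Δ → (∀ G, G ⊂ F → G ∈ Δ) → F.card ≤ 2) ∧
      (∀ i : ℕ, hrpoly.coeff i = ((Δ.filter fun F => F.card = i).card : ℤ)) := by
  have : Nontrivial A := by
    by_contra hA
    rw [not_nontrivial_iff_subsingleton] at hA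
    simp [ringKrullDim_eq_bot_of_subsingleton] at hdim
  have hgen := adjoin_eq_top_of_forall_eq_pow hstd
  have : Algebra.FiniteType K A := finiteType_of_adjoin_eq_top hgen
  have hdim' : ringKrullDim (A ⧸ (⊥ : Ideal A)) ≤ d := (ringKrullDim_quotient_le ⊥).trans hdim.le
  obtain ⟨θ, hθ, hθfin⟩ := exists_linear_parameters hgen hdim'
  rw [bot_sup_eq] at hθfin
  have hhr' : (hrpoly : PowerSeries ℤ) =
      veroneseSection r (hilbertSeries 𝒜) * (1 - PowerSeries.X) ^ d := by
    rw [hhr]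
    congr
    ext i
    simp [hilbertSeries]
  have hcoeff := coeff_eq_chainCount_of_isWeaklyRegular hstd hθ (hCM θ hθ hθfin).toIsWeaklyRegular
    hh hrbound hhr'
  simpa only [hcoeff, Nat.cast_inj, eq_comm (a := chainCount _ _)] using
    exists_flag_complex_card_filter_eq_chainCount (Block d r _)

/-- **Theorem 1.3(i), Kubitzke–Murai.**
Let `K` be a field of characteristic `0` and `A` a Cohen-Macaulay standard graded `K`-algebra
of Krull dimension `d` with `h`-polynomial `h = h_A(t)` (so that
`Hilb(A,t) = h/(1-t)^d`), and let `hr = h_{A^⟨r⟩}(t)` be the `h`-polynomial of the `r`-th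
Veronese subalgebra `A^⟨r⟩ = ⊕_i A_{ir}` (whose Hilbert series is
`∑_i dim_K A_{ir} tⁱ` and whose Krull dimension is again `d`).
If `r ≥ (deg h_A(t) + 1)/2`, then `h_{A^⟨r⟩}(t)` is the `f`-polynomial of a flag simplicial
complex `Δ`: `∅ ∈ Δ`, `Δ` is closed under subsets, every minimal non-face of `Δ` has at most
two elements, and for every `i` the coefficient of `tⁱ` in `h_{A^⟨r⟩}(t)` is the number of
faces of `Δ` of cardinality `i`. -/
theorem veronese_h_polynomial_flag
    (K : Type*) [Field K] [CharZero K]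
    (A : Type*) [CommRing A] [Algebra K A]
    (𝒜 : ℕ → Submodule K A) [GradedAlgebra 𝒜]
    (hstd : ∀ i, 𝒜 i = 𝒜 1 ^ i)
    (hfin : ∀ i, Module.Finite K (𝒜 i))
    (d : ℕ) (hdim : ringKrullDim A = d)
    (hCM : ∀ θ' : Fin d → A, (∀ j, θ' j ∈ 𝒜 1) →
      Module.Finite K (A ⧸ Ideal.span (Set.range θ')) →
      RingTheory.Sequence.IsRegular A (List.ofFn θ'))
    (h : Polynomial ℤ)
    (hh : (h : PowerSeries ℤ) =
      (PowerSeries.mk fun i => (Module.finrank K (𝒜 i) : ℤ)) * (1 - PowerSeries.X) ^ d)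
    (r : ℕ) (hr : 1 ≤ r) (hrbound : h.natDegree + 1 ≤ 2 * r)
    (hrpoly : Polynomial ℤ)
    (hhr : (hrpoly : PowerSeries ℤ) =
      (PowerSeries.mk fun i => (Module.finrank K (𝒜 (i * r)) : ℤ)) * (1 - PowerSeries.X) ^ d) :
    ∃ (n : ℕ) (Δ : Finset (Finset (Fin n))),
      ∅ ∈ Δ ∧
      (∀ F ∈ Δ, ∀ G ⊆ F, G ∈ Δ) ∧
      (∀ F : Finset (Fin n), F ∉ Δ → (∀ G, G ⊂ F → G ∈ Δ) → F.card ≤ 2) ∧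
      (∀ i : ℕ, hrpoly.coeff i = ((Δ.filter fun F => F.card = i).card : ℤ)) :=
  veronese_h_polynomial_flag_general K A 𝒜 hstd hfin d hdim hCM h hh r hrbound hrpoly hhr
end
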